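/- arXiv:2004.06712 — 3 statements merged into one kernel-verified Lean document; each statement's English description precedes it below -/
import Mathlib

section
/- Let (Ω, 𝒜, μ) be a σ-finite measure space and let {T_u : u ∈ ℝ₊^d} be a semigroup of positive Dunford–Schwartz operators that is L¹-continuous in the interior of ℝ₊^d. Then for every f ∈ R_μ the averages A_t(f) = t^{−d} ∫_{(0,t]^d} T_u(f) du converge almost uniformly as t → ∞ to some f̂ ∈ R_μ. -/
open MeasureTheory Filter Set ENNReal Topology

variable {Ω : Type*} [MeasurableSpace Ω]

/-- `f` belongs to `L¹(μ) + L^∞(μ)`. -/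
def MemL1pLinf (μ : Measure Ω) (f : Ω →ₘ[μ] ℝ) : Prop :=
  ∃ g h : Ω →ₘ[μ] ℝ, eLpNorm g 1 μ ≠ ∞ ∧ eLpNorm h ⊤ μ ≠ ∞ ∧ f = g + h

/-- A positive Dunford–Schwartz operator: linear and positive on `L¹+L^∞`,
contracting both the `L¹`- and `L^∞`-norms. -/
structure IsPosDS (μ : Measure Ω) (T : (Ω →ₘ[μ] ℝ) → (Ω →ₘ[μ] ℝ)) : Prop where
  map_add : ∀ f g, MemL1pLinf μ f → MemL1pLinf μ g → T (f + g) = T f + T g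
  map_smul : ∀ (c : ℝ) (f), MemL1pLinf μ f → T (c • f) = c • T f
  map_pos : ∀ f, MemL1pLinf μ f → 0 ≤ f → 0 ≤ T f
  norm_one : ∀ f, MemL1pLinf μ f → eLpNorm (T f) 1 μ ≤ eLpNorm f 1 μ
  norm_top : ∀ f, MemL1pLinf μ f → eLpNorm (T f) ⊤ μ ≤ eLpNorm f ⊤ μ

/-- The Cesàro averages `A_n(f) = (1/n) ∑_{k<n} T^k f`. -/
noncomputable def cesaro (μ : Measure Ω) (T : (Ω →ₘ[μ] ℝ) → (Ω →ₘ[μ] ℝ)) (n : ℕ)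
    (f : Ω →ₘ[μ] ℝ) : Ω →ₘ[μ] ℝ :=
  (n : ℝ)⁻¹ • ∑ k ∈ Finset.range n, T^[k] f

/-- Almost uniform convergence of a net `F` to `f`. -/
def AuTendsto {ι : Type*} (μ : Measure Ω) (l : Filter ι) (F : ι → Ω →ₘ[μ] ℝ)
    (f : Ω →ₘ[μ] ℝ) : Prop :=
  ∀ ε : ℝ, 0 < ε → ∃ E : Set Ω, MeasurableSet E ∧ μ Eᶜ ≤ ENNReal.ofReal ε ∧
    Tendsto (fun i => eLpNorm (E.indicator (⇑(F i - f))) ⊤ μ) l (𝓝 0)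

/-- `R_μ`: elements of `L¹+L^∞` whose distribution tails are finite. -/
def MemRmu (μ : Measure Ω) (f : Ω →ₘ[μ] ℝ) : Prop :=
  MemL1pLinf μ f ∧ ∀ lam : ℝ, 0 < lam → μ {ω | lam < |f ω|} < ∞

/-!
Write the flow on `ℕ^d` as a family of commuting operators. Brunel's heavy-tailed law on `ℕ^d` turns
them into a single positive Dunford–Schwartz operator whose powers, summed up, dominate the averages
over cubes. Hopf's maximal inequality for this operator then yields the weak type `(1, 1)` maximal
inequality for the cube averages.

By the Banach principle, a maximal inequality makes the set of elements whose averages are almost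
uniformly Cauchy closed. For the cube averages on `L²` this set contains the common fixed vectors
and the coboundaries `g - T_i g` with `g` simple, which together span a dense subspace. For positive
`g`, the function `t ↦ t^d A_t(g)` is monotone and `A_n(g)` is the `n`-th cube average of `A_1(g)`,
so the averages over `(0, t]^d` are squeezed between cube averages with `n = ⌊t⌋` and
`n = ⌊t⌋ + 1`. This gives almost uniform convergence on `L¹`. An `f ∈ R_μ` lies within every `ε > 0`
of `L¹` in the `L^∞`-norm, which the averages contract.
-/

/-! ### The space `L¹ + L^∞` -/

section Membership

theorem abs_sub_clamp {c : ℝ} (hc : 0 ≤ c) (x : ℝ) :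
    |x - max (-c) (min c x)| = max (|x| - c) 0 := by
  rcases le_total c x with h₁ | h₁
  · rw [min_eq_left h₁, max_eq_right (by linarith), abs_of_nonneg (by linarith),
      abs_of_nonneg (by linarith), max_eq_left (by linarith)]
  · rcases le_total x (-c) with h₂ | h₂
    · rw [min_eq_right h₁, max_eq_left h₂, abs_of_nonpos (by linarith),
        abs_of_nonpos (by linarith), max_eq_left (by linarith)]
      ring
    · rw [min_eq_right h₁, max_eq_right h₂, sub_self, abs_zero,
        max_eq_right (by linarith [abs_le.2 ⟨h₂, h₁⟩])]

variable {μ : Measure Ω} {f g : Ω →ₘ[μ] ℝ}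

theorem eLpNorm_coeFn_zero (p : ℝ≥0∞) : eLpNorm (⇑(0 : Ω →ₘ[μ] ℝ)) p μ = 0 := by
  rw [eLpNorm_congr_ae AEEqFun.coeFn_zero, eLpNorm_zero]

theorem exists_Lp_one_abs_sub_le {c : ℝ} (hc : 0 ≤ c)
    (hfin : ∫⁻ ω, ENNReal.ofReal (|f ω| - c) ∂μ ≠ ∞) :
    ∃ g : Lp ℝ 1 μ, ∀ᵐ ω ∂μ, |f ω - g ω| ≤ c := by
  have hcont : Continuous fun x : ℝ => x - max (-c) (min c x) := by fun_prop
  have hint : Integrable (fun ω => f ω - max (-c) (min c (f ω))) μ := by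
    refine ⟨hcont.comp_aestronglyMeasurable f.aestronglyMeasurable, ?_⟩
    simpa only [HasFiniteIntegral, Real.enorm_eq_ofReal_abs, abs_sub_clamp hc, ENNReal.ofReal_max,
      ENNReal.ofReal_zero, max_zero] using hfin.lt_top
  refine ⟨(memLp_one_iff_integrable.2 hint).toLp _, ?_⟩
  filter_upwards [(memLp_one_iff_integrable.2 hint).coeFn_toLp] with ω hω
  rw [hω, _root_.sub_sub_cancel]
  exact abs_le.2 ⟨le_max_left _ _, max_le (by linarith) (min_le_left _ _)⟩

theorem memL1pLinf_of_eLpNorm_one_ne_top (hf : eLpNorm f 1 μ ≠ ∞) : MemL1pLinf μ f :=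
  ⟨f, 0, hf, by rw [eLpNorm_coeFn_zero]; exact zero_ne_top, (add_zero f).symm⟩

theorem memL1pLinf_of_eLpNorm_top_ne_top (hf : eLpNorm f ⊤ μ ≠ ∞) : MemL1pLinf μ f :=
  ⟨0, f, by rw [eLpNorm_coeFn_zero]; exact zero_ne_top, hf, (zero_add f).symm⟩

theorem ae_abs_le_toReal_eLpNorm_top {f : Ω → ℝ} (hf : eLpNorm f ⊤ μ ≠ ∞) :
    ∀ᵐ ω ∂μ, |f ω| ≤ (eLpNorm f ⊤ μ).toReal := by
  filter_upwards [ae_le_eLpNormEssSup (f := f) (μ := μ)] with ω hω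
  rwa [← eLpNorm_exponent_top, Real.enorm_eq_ofReal_abs, ofReal_le_iff_le_toReal hf] at hω

theorem memL1pLinf_iff_lintegral :
    MemL1pLinf μ f ↔ ∃ c : ℝ, 0 ≤ c ∧ ∫⁻ ω, ENNReal.ofReal (|f ω| - c) ∂μ ≠ ∞ := by
  constructor
  · rintro ⟨g, h, hg, hh, rfl⟩
    refine ⟨(eLpNorm h ⊤ μ).toReal, toReal_nonneg, ne_top_of_le_ne_top hg ?_⟩
    rw [eLpNorm_one_eq_lintegral_enorm]
    refine lintegral_mono_ae ?_
    filter_upwards [ae_abs_le_toReal_eLpNorm_top hh, AEEqFun.coeFn_add g h] with ω hω hadd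
    rw [hadd, Real.enorm_eq_ofReal_abs, Pi.add_apply]
    exact ofReal_le_ofReal (by linarith [abs_add_le (g ω) (h ω)])
  · rintro ⟨c, hc, hfin⟩
    obtain ⟨g, hfg⟩ := exists_Lp_one_abs_sub_le hc hfin
    refine ⟨g, f - g, (Lp.memLp g).eLpNorm_ne_top, ?_, (add_sub_cancel _ _).symm⟩
    refine (memLp_top_of_bound (AEEqFun.aestronglyMeasurable _) c ?_).eLpNorm_ne_top
    filter_upwards [AEEqFun.coeFn_sub f g, hfg] with ω hsub hω
    rwa [hsub, Pi.sub_apply, Real.norm_eq_abs]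

theorem MemL1pLinf.mono (hg : MemL1pLinf μ g) (hfg : ∀ᵐ ω ∂μ, |f ω| ≤ |g ω|) :
    MemL1pLinf μ f := by
  obtain ⟨c, hc, hfin⟩ := memL1pLinf_iff_lintegral.1 hg
  refine memL1pLinf_iff_lintegral.2 ⟨c, hc, ne_top_of_le_ne_top hfin (lintegral_mono_ae ?_)⟩
  filter_upwards [hfg] with ω hω
  gcongr

theorem memL1pLinf_of_memLp {p : ℝ≥0∞} (hp : 1 ≤ p) (hf : MemLp f p μ) : MemL1pLinf μ f := by
  rcases eq_or_ne p ⊤ with rfl | htop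
  · exact memL1pLinf_of_eLpNorm_top_ne_top hf.eLpNorm_ne_top
  refine memL1pLinf_iff_lintegral.2 ⟨1, zero_le_one, ne_top_of_le_ne_top
    (lintegral_rpow_enorm_lt_top_of_eLpNorm_lt_top (one_pos.trans_le hp).ne' htop hf.2).ne
    (lintegral_mono fun ω => ?_)⟩
  rw [Real.enorm_eq_ofReal_abs, ofReal_rpow_of_nonneg (abs_nonneg _) toReal_nonneg]
  refine ofReal_le_ofReal ?_
  rcases le_total |f ω| 1 with h | h
  · exact (sub_nonpos.2 h).trans (Real.rpow_nonneg (abs_nonneg _) _)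
  · exact (sub_le_self _ zero_le_one).trans
      (Real.self_le_rpow_of_one_le h (by simpa using toReal_mono htop hp))

theorem MemRmu.lintegral_ne_top (hf : MemRmu μ f) {c : ℝ} (hc : 0 < c) :
    ∫⁻ ω, ENNReal.ofReal (|f ω| - c) ∂μ ≠ ∞ := by
  obtain ⟨a, -, ha⟩ := memL1pLinf_iff_lintegral.1 hf.1
  have hS : MeasurableSet {ω | c < |f ω|} := measurableSet_lt measurable_const f.measurable.norm
  have hbound : ∀ ω, ENNReal.ofReal (|f ω| - c) ≤
      ENNReal.ofReal (|f ω| - a) + {ω | c < |f ω|}.indicator (fun _ => ENNReal.ofReal a) ω := by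
    intro ω
    by_cases hω : c < |f ω|
    · rw [indicator_of_mem (by exact hω)]
      exact (ofReal_le_ofReal (by linarith)).trans ofReal_add_le
    · rw [ofReal_of_nonpos (by linarith)]
      exact zero_le
  refine ne_top_of_le_ne_top ?_ (lintegral_mono hbound)
  rw [lintegral_add_right _ (measurable_const.indicator hS), lintegral_indicator_const hS]
  exact add_ne_top.2 ⟨ha, mul_ne_top ofReal_ne_top (hf.2 c hc).ne⟩

theorem memRmu_iff_lintegral :
    MemRmu μ f ↔ ∀ c : ℝ, 0 < c → ∫⁻ ω, ENNReal.ofReal (|f ω| - c) ∂μ ≠ ∞ := by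
  refine ⟨fun hf c hc => hf.lintegral_ne_top hc, fun h =>
    ⟨memL1pLinf_iff_lintegral.2 ⟨1, zero_le_one, h 1 one_pos⟩, fun lam hlam => ?_⟩⟩
  have hm : Measurable fun ω => ENNReal.ofReal (|f ω| - lam / 2) :=
    (f.measurable.norm.sub_const _).ennreal_ofReal
  refine (measure_mono fun ω (hω : lam < |f ω|) => ?_).trans_lt
    (meas_ge_le_lintegral_div hm.aemeasurable (ofReal_pos.2 (half_pos hlam)).ne' ofReal_ne_top
      |>.trans_lt (div_lt_top (h _ (half_pos hlam)) (ofReal_pos.2 (half_pos hlam)).ne'))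
  exact ofReal_le_ofReal (by linarith)

theorem MemRmu.of_ae_tendsto {F : ℕ → Ω →ₘ[μ] ℝ} (hf : MemRmu μ f)
    (hF : ∀ c : ℝ, 0 < c → ∀ᶠ n in atTop,
      ∫⁻ ω, ENNReal.ofReal (|F n ω| - c) ∂μ ≤ ∫⁻ ω, ENNReal.ofReal (|f ω| - c) ∂μ)
    (hlim : ∀ᵐ ω ∂μ, Tendsto (fun n => F n ω) atTop (𝓝 (g ω))) : MemRmu μ g := by
  refine memRmu_iff_lintegral.2 fun c hc => ne_top_of_le_ne_top (hf.lintegral_ne_top hc) ?_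
  calc ∫⁻ ω, ENNReal.ofReal (|g ω| - c) ∂μ
      = ∫⁻ ω, liminf (fun n => ENNReal.ofReal (|F n ω| - c)) atTop ∂μ := by
        refine lintegral_congr_ae (hlim.mono fun ω hω => Eq.symm (Tendsto.liminf_eq ?_))
        exact tendsto_ofReal (hω.abs.sub_const c)
    _ ≤ liminf (fun n => ∫⁻ ω, ENNReal.ofReal (|F n ω| - c) ∂μ) atTop :=
        lintegral_liminf_le fun n => ((F n).measurable.norm.sub_const c).ennreal_ofReal
    _ ≤ ∫⁻ ω, ENNReal.ofReal (|f ω| - c) ∂μ := liminf_le_of_frequently_le' (hF c hc).frequently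

end Membership

/-- The vector space `L¹(μ) + L^∞(μ)`, as a subspace of the space of all classes of measurable
functions. -/
def L1pLinf (μ : Measure Ω) : Submodule ℝ (Ω →ₘ[μ] ℝ) where
  carrier := {f | MemL1pLinf μ f}
  add_mem' := by
    rintro _ _ ⟨g, h, hg, hh, rfl⟩ ⟨g', h', hg', hh', rfl⟩
    have add_ne_top' : ∀ {p : ℝ≥0∞} {a b : Ω →ₘ[μ] ℝ}, 1 ≤ p → eLpNorm a p μ ≠ ∞ →
        eLpNorm b p μ ≠ ∞ → eLpNorm (a + b) p μ ≠ ∞ := fun {p a b} hp ha hb => by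
      rw [eLpNorm_congr_ae (AEEqFun.coeFn_add a b)]
      exact ne_top_of_le_ne_top (add_ne_top.2 ⟨ha, hb⟩)
        (eLpNorm_add_le a.aestronglyMeasurable b.aestronglyMeasurable hp)
    exact ⟨g + g', h + h', add_ne_top' le_rfl hg hg', add_ne_top' le_top hh hh',
      add_add_add_comm g h g' h'⟩
  zero_mem' := memL1pLinf_of_eLpNorm_one_ne_top (by rw [eLpNorm_coeFn_zero]; exact zero_ne_top)
  smul_mem' := by
    rintro c _ ⟨g, h, hg, hh, rfl⟩
    have smul_ne_top : ∀ {p : ℝ≥0∞} {a : Ω →ₘ[μ] ℝ}, eLpNorm a p μ ≠ ∞ →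
        eLpNorm (c • a) p μ ≠ ∞ := fun {p a} ha => by
      rw [eLpNorm_congr_ae (AEEqFun.coeFn_smul c a), eLpNorm_const_smul]
      exact mul_ne_top enorm_ne_top ha
    exact ⟨c • g, c • h, smul_ne_top hg, smul_ne_top hh, smul_add c g h⟩

namespace L1pLinf

variable {μ : Measure Ω}

noncomputable instance : CoeFun (L1pLinf μ) fun _ => Ω → ℝ := ⟨fun f => ⇑(f : Ω →ₘ[μ] ℝ)⟩

theorem aestronglyMeasurable (f : L1pLinf μ) : AEStronglyMeasurable f μ :=
  AEEqFun.aestronglyMeasurable _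

theorem measurable (f : L1pLinf μ) : Measurable f := AEEqFun.measurable _

theorem coeFn_add (f g : L1pLinf μ) : ⇑(f + g) =ᵐ[μ] f + g := AEEqFun.coeFn_add _ _

theorem coeFn_sub (f g : L1pLinf μ) : ⇑(f - g) =ᵐ[μ] f - g := AEEqFun.coeFn_sub _ _

theorem coeFn_neg (f : L1pLinf μ) : ⇑(-f) =ᵐ[μ] -f := AEEqFun.coeFn_neg _

theorem coeFn_smul (c : ℝ) (f : L1pLinf μ) : ⇑(c • f) =ᵐ[μ] c • f := AEEqFun.coeFn_smul _ _

theorem coeFn_zero : ⇑(0 : L1pLinf μ) =ᵐ[μ] 0 := AEEqFun.coeFn_zero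

theorem coeFn_sum {ι : Type*} (s : Finset ι) (f : ι → L1pLinf μ) :
    ⇑(∑ i ∈ s, f i) =ᵐ[μ] ∑ i ∈ s, ⇑(f i) := by
  classical
  induction s using Finset.induction_on with
  | empty => exact coeFn_zero
  | insert a s ha ih =>
    rw [Finset.sum_insert ha, Finset.sum_insert ha]
    exact (coeFn_add _ _).trans (ih.mono fun ω hω => congrArg (f a ω + ·) hω)

/-- The constant functions, as elements of `L¹ + L^∞`. -/
noncomputable def const (μ : Measure Ω) (c : ℝ) : L1pLinf μ :=
  ⟨AEEqFun.const Ω c, memL1pLinf_of_memLp le_top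
    ((memLp_top_const c).ae_eq (AEEqFun.coeFn_const Ω c).symm)⟩

theorem coeFn_const (c : ℝ) : ⇑(const μ c) =ᵐ[μ] fun _ => c := AEEqFun.coeFn_const Ω c

/-- The absolute value of an element of `L¹ + L^∞`. -/
noncomputable def abs (f : L1pLinf μ) : L1pLinf μ :=
  ⟨|(f : Ω →ₘ[μ] ℝ)|, f.2.mono <| by
    filter_upwards [AEEqFun.coeFn_abs (f : Ω →ₘ[μ] ℝ)] with ω hω
    rw [hω, abs_abs]⟩

theorem coeFn_abs (f : L1pLinf μ) : ⇑(abs f) =ᵐ[μ] fun ω => |f ω| := AEEqFun.coeFn_abs _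

/-- The positive part of an element of `L¹ + L^∞`. -/
noncomputable def posPart (f : L1pLinf μ) : L1pLinf μ :=
  ⟨AEEqFun.posPart f, f.2.mono <| by
    filter_upwards [AEEqFun.coeFn_posPart (f : Ω →ₘ[μ] ℝ)] with ω hω
    rw [hω, abs_of_nonneg (le_max_right _ _)]
    exact max_le (le_abs_self _) (abs_nonneg _)⟩

theorem coeFn_posPart (f : L1pLinf μ) : ⇑(posPart f) =ᵐ[μ] fun ω => max (f ω) 0 :=
  AEEqFun.coeFn_posPart _

/-- The inclusion of `L^p`, `1 ≤ p ≤ ∞`, in `L¹ + L^∞`. -/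
def ofLp {p : ℝ≥0∞} [hp : Fact (1 ≤ p)] : Lp ℝ p μ →ₗ[ℝ] L1pLinf μ where
  toFun g := ⟨g, memL1pLinf_of_memLp hp.out (Lp.memLp g)⟩
  map_add' _ _ := rfl
  map_smul' _ _ := rfl

theorem coeFn_ofLp {p : ℝ≥0∞} [Fact (1 ≤ p)] (g : Lp ℝ p μ) : ⇑(ofLp g) = g := rfl

/-- The restriction to `L^p` of an operator on `L¹ + L^∞` that contracts the `L^p`-norm. -/
noncomputable def lpRestrict {p : ℝ≥0∞} [Fact (1 ≤ p)] (U : Module.End ℝ (L1pLinf μ))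
    (hU : ∀ f, eLpNorm (U f) p μ ≤ eLpNorm f p μ) : Lp ℝ p μ →L[ℝ] Lp ℝ p μ :=
  LinearMap.mkContinuous
    { toFun g := ⟨U (ofLp g), (hU _).trans_lt (Lp.eLpNorm_lt_top g)⟩
      map_add' f g := Subtype.ext (congrArg (L1pLinf μ).subtype (map_add (U ∘ₗ ofLp) f g))
      map_smul' c g := Subtype.ext (congrArg (L1pLinf μ).subtype (map_smul (U ∘ₗ ofLp) c g)) }
    1 fun g => by
      rw [one_mul, Lp.norm_def, Lp.norm_def]
      exact toReal_mono (Lp.eLpNorm_ne_top g) (hU _)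

variable {p : ℝ≥0∞} [Fact (1 ≤ p)] {U : Module.End ℝ (L1pLinf μ)}
  (hU : ∀ f, eLpNorm (U f) p μ ≤ eLpNorm f p μ)

theorem norm_lpRestrict_le : ‖lpRestrict U hU‖ ≤ 1 :=
  LinearMap.mkContinuous_norm_le _ zero_le_one _

end L1pLinf

/-! ### Positive Dunford–Schwartz operators -/

/-- A positive Dunford–Schwartz operator, as an endomorphism of the vector space `L¹ + L^∞`. -/
structure IsDunfordSchwartz {μ : Measure Ω} (U : Module.End ℝ (L1pLinf μ)) : Prop where
  nonneg : ∀ f : L1pLinf μ, 0 ≤ᵐ[μ] f → 0 ≤ᵐ[μ] U f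
  eLpNorm_one_le : ∀ f : L1pLinf μ, eLpNorm (U f) 1 μ ≤ eLpNorm f 1 μ
  eLpNorm_top_le : ∀ f : L1pLinf μ, eLpNorm (U f) ⊤ μ ≤ eLpNorm f ⊤ μ

namespace IsPosDS

variable {μ : Measure Ω} {T : (Ω →ₘ[μ] ℝ) → (Ω →ₘ[μ] ℝ)}

theorem memL1pLinf (hT : IsPosDS μ T) {f : Ω →ₘ[μ] ℝ} (hf : MemL1pLinf μ f) :
    MemL1pLinf μ (T f) := by
  obtain ⟨g, h, hg, hh, rfl⟩ := hf
  have hg' := memL1pLinf_of_eLpNorm_one_ne_top hg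
  have hh' := memL1pLinf_of_eLpNorm_top_ne_top hh
  exact ⟨T g, T h, ne_top_of_le_ne_top hg (hT.norm_one g hg'),
    ne_top_of_le_ne_top hh (hT.norm_top h hh'), hT.map_add _ _ hg' hh'⟩

end IsPosDS

open Classical in
/-- The endomorphism of `L¹ + L^∞` given by a positive Dunford–Schwartz operator. It is set to `0`
on other maps `T`, so that `dsEnd μ T` is a positive Dunford–Schwartz operator in all cases. -/
noncomputable def dsEnd (μ : Measure Ω) (T : (Ω →ₘ[μ] ℝ) → (Ω →ₘ[μ] ℝ)) :
    Module.End ℝ (L1pLinf μ) :=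
  if hT : IsPosDS μ T then
    { toFun f := ⟨T f, hT.memL1pLinf f.2⟩
      map_add' f g := Subtype.ext (hT.map_add _ _ f.2 g.2)
      map_smul' c f := Subtype.ext (hT.map_smul c _ f.2) }
  else 0

theorem IsPosDS.coe_dsEnd {μ : Measure Ω} {T : (Ω →ₘ[μ] ℝ) → (Ω →ₘ[μ] ℝ)} (hT : IsPosDS μ T)
    (f : L1pLinf μ) : (dsEnd μ T f : Ω →ₘ[μ] ℝ) = T f := by
  rw [dsEnd, dif_pos hT]
  rfl

theorem isDunfordSchwartz_zero {μ : Measure Ω} :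
    IsDunfordSchwartz (0 : Module.End ℝ (L1pLinf μ)) where
  nonneg _ _ := L1pLinf.coeFn_zero.symm.le
  eLpNorm_one_le _ := (eLpNorm_coeFn_zero 1).trans_le (zero_le ..)
  eLpNorm_top_le _ := (eLpNorm_coeFn_zero ⊤).trans_le (zero_le ..)

theorem isDunfordSchwartz_dsEnd (μ : Measure Ω) (T : (Ω →ₘ[μ] ℝ) → (Ω →ₘ[μ] ℝ)) :
    IsDunfordSchwartz (dsEnd μ T) := by
  by_cases hT : IsPosDS μ T
  · refine ⟨fun f hf => ?_, fun f => ?_, fun f => ?_⟩ <;> rw [hT.coe_dsEnd]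
    · have hTf := hT.map_pos f f.2 (AEEqFun.coeFn_le.1 (AEEqFun.coeFn_zero.le.trans hf))
      exact AEEqFun.coeFn_zero.symm.le.trans (AEEqFun.coeFn_le.2 hTf)
    · exact hT.norm_one f f.2
    · exact hT.norm_top f f.2
  · rw [dsEnd, dif_neg hT]
    exact isDunfordSchwartz_zero

theorem sq_eLpNorm_two {μ : Measure Ω} (h : Ω → ℝ) :
    eLpNorm h 2 μ ^ 2 = ∫⁻ ω, ENNReal.ofReal (h ω ^ 2) ∂μ := by
  have hsq := eLpNorm_nnreal_pow_eq_lintegral (f := h) (μ := μ) (p := 2) two_ne_zero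
  simpa only [NNReal.coe_ofNat, ENNReal.coe_ofNat, ENNReal.rpow_ofNat, Real.enorm_eq_ofReal_abs,
    ← ofReal_pow (abs_nonneg _), sq_abs] using hsq

theorem L1pLinf.exists_coeFn_eq_sq {μ : Measure Ω} {f : L1pLinf μ} (hf : MemLp f 2 μ) :
    ∃ g : L1pLinf μ, ⇑g =ᵐ[μ] fun ω => f ω ^ 2 :=
  have hsq := memLp_one_iff_integrable.2 hf.integrable_sq
  ⟨ofLp (hsq.toLp _), hsq.coeFn_toLp⟩

namespace IsDunfordSchwartz

variable {μ : Measure Ω} {U W : Module.End ℝ (L1pLinf μ)} {f g : L1pLinf μ}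

theorem one : IsDunfordSchwartz (1 : Module.End ℝ (L1pLinf μ)) :=
  ⟨fun _ hf => hf, fun _ => le_rfl, fun _ => le_rfl⟩

theorem mul (hU : IsDunfordSchwartz U) (hW : IsDunfordSchwartz W) : IsDunfordSchwartz (U * W) :=
  ⟨fun f hf => hU.nonneg _ (hW.nonneg f hf),
    fun f => (hU.eLpNorm_one_le _).trans (hW.eLpNorm_one_le f),
    fun f => (hU.eLpNorm_top_le _).trans (hW.eLpNorm_top_le f)⟩

theorem pow (hU : IsDunfordSchwartz U) : ∀ n : ℕ, IsDunfordSchwartz (U ^ n)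
  | 0 => pow_zero U ▸ one
  | n + 1 => pow_succ U n ▸ (hU.pow n).mul hU

theorem coeFn_sum_smul_apply {ι : Type*} (s : Finset ι) (w : ι → ℝ)
    (V : ι → Module.End ℝ (L1pLinf μ)) (f : L1pLinf μ) :
    ⇑((∑ i ∈ s, w i • V i) f) =ᵐ[μ] fun ω => ∑ i ∈ s, w i * V i f ω := by
  have hsmul : ∀ᵐ ω ∂μ, ∀ i ∈ s, (w i • V i f) ω = w i * V i f ω :=
    (eventually_all_finset s).2 fun i _ => L1pLinf.coeFn_smul (w i) (V i f)
  rw [LinearMap.sum_apply]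
  filter_upwards [L1pLinf.coeFn_sum s fun i => (w i • V i) f, hsmul] with ω hω hsmul
  rw [hω, Finset.sum_apply]
  exact Finset.sum_congr rfl hsmul

theorem eLpNorm_sum_smul_apply_le {ι : Type*} {s : Finset ι} {w : ι → ℝ}
    {V : ι → Module.End ℝ (L1pLinf μ)} {p : ℝ≥0∞} (hp : 1 ≤ p) (hw : ∀ i ∈ s, 0 ≤ w i)
    (hsum : ∑ i ∈ s, w i ≤ 1) (hV : ∀ i ∈ s, eLpNorm (V i f) p μ ≤ eLpNorm f p μ) :
    eLpNorm ((∑ i ∈ s, w i • V i) f) p μ ≤ eLpNorm f p μ := by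
  have hcoe : ⇑((∑ i ∈ s, w i • V i) f) =ᵐ[μ] ∑ i ∈ s, w i • ⇑(V i f) := by
    filter_upwards [coeFn_sum_smul_apply s w V f] with ω hω
    simp only [hω, Finset.sum_apply, Pi.smul_apply, smul_eq_mul]
  calc eLpNorm ((∑ i ∈ s, w i • V i) f) p μ
      ≤ ∑ i ∈ s, eLpNorm (w i • ⇑(V i f)) p μ := by
        rw [eLpNorm_congr_ae hcoe]
        exact eLpNorm_sum_le
          (fun i _ => (L1pLinf.aestronglyMeasurable (V i f)).const_smul (w i)) hp
    _ ≤ ∑ i ∈ s, ENNReal.ofReal (w i) * eLpNorm f p μ := by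
        refine Finset.sum_le_sum fun i hi => ?_
        rw [eLpNorm_const_smul, Real.enorm_eq_ofReal (hw i hi)]
        gcongr
        exact hV i hi
    _ = ENNReal.ofReal (∑ i ∈ s, w i) * eLpNorm f p μ := by
        rw [← Finset.sum_mul, ofReal_sum_of_nonneg hw]
    _ ≤ eLpNorm f p μ := mul_le_of_le_one_left' (ofReal_le_one.2 hsum)

theorem sum_smul {ι : Type*} {s : Finset ι} {w : ι → ℝ} {V : ι → Module.End ℝ (L1pLinf μ)}
    (hw : ∀ i ∈ s, 0 ≤ w i) (hsum : ∑ i ∈ s, w i ≤ 1) (hV : ∀ i ∈ s, IsDunfordSchwartz (V i)) :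
    IsDunfordSchwartz (∑ i ∈ s, w i • V i) where
  nonneg f hf := by
    have hnonneg : ∀ᵐ ω ∂μ, ∀ i ∈ s, 0 ≤ V i f ω :=
      (eventually_all_finset s).2 fun i hi => (hV i hi).nonneg f hf
    filter_upwards [coeFn_sum_smul_apply s w V f, hnonneg] with ω hω hnonneg
    rw [hω]
    exact Finset.sum_nonneg fun i hi => mul_nonneg (hw i hi) (hnonneg i hi)
  eLpNorm_one_le f :=
    eLpNorm_sum_smul_apply_le le_rfl hw hsum fun i hi => (hV i hi).eLpNorm_one_le f
  eLpNorm_top_le f :=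
    eLpNorm_sum_smul_apply_le le_top hw hsum fun i hi => (hV i hi).eLpNorm_top_le f

theorem mono (hU : IsDunfordSchwartz U) (hfg : f ≤ᵐ[μ] g) : U f ≤ᵐ[μ] U g := by
  have hsub : 0 ≤ᵐ[μ] U (g - f) := hU.nonneg _ <| by
    filter_upwards [hfg, L1pLinf.coeFn_sub g f] with ω hω hsub
    rw [hsub]
    exact sub_nonneg.2 hω
  rw [map_sub] at hsub
  filter_upwards [hsub, L1pLinf.coeFn_sub (U g) (U f)] with ω hω hsub
  rw [hsub] at hω
  exact sub_nonneg.1 hω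

theorem abs_le (hU : IsDunfordSchwartz U) (hfg : ∀ᵐ ω ∂μ, |f ω| ≤ g ω) :
    ∀ᵐ ω ∂μ, |U f ω| ≤ U g ω := by
  have hpos : U f ≤ᵐ[μ] U g := hU.mono (hfg.mono fun ω hω => (le_abs_self _).trans hω)
  have hneg : U (-f) ≤ᵐ[μ] U g := hU.mono <| by
    filter_upwards [hfg, L1pLinf.coeFn_neg f] with ω hω hneg
    rw [hneg]
    exact (neg_le_abs _).trans hω
  rw [map_neg] at hneg
  filter_upwards [hpos, hneg, L1pLinf.coeFn_neg (U f)] with ω hpos hneg hω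
  rw [hω] at hneg
  exact abs_le'.2 ⟨hpos, hneg⟩

theorem abs_le_const (hU : IsDunfordSchwartz U) {c : ℝ} (hf : ∀ᵐ ω ∂μ, |f ω| ≤ c) :
    ∀ᵐ ω ∂μ, |U f ω| ≤ c := by
  rcases eq_or_ne μ 0 with rfl | hμ
  · simp
  have : (ae μ).NeBot := ae_neBot.2 hμ
  have hc : 0 ≤ c := let ⟨_, hω⟩ := hf.exists; (abs_nonneg _).trans hω
  have hle : eLpNorm (U f) ⊤ μ ≤ ENNReal.ofReal c := by
    refine (hU.eLpNorm_top_le f).trans ?_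
    rw [eLpNorm_exponent_top]
    exact eLpNormEssSup_le_of_ae_bound hf
  filter_upwards [ae_abs_le_toReal_eLpNorm_top (ne_top_of_le_ne_top ofReal_ne_top hle)] with ω hω
  exact hω.trans (toReal_le_of_le_ofReal hc hle)

theorem le_const (hU : IsDunfordSchwartz U) {c : ℝ} (hc : 0 ≤ c) (hf : ∀ᵐ ω ∂μ, f ω ≤ c) :
    ∀ᵐ ω ∂μ, U f ω ≤ c := by
  have hconst : ∀ᵐ ω ∂μ, |L1pLinf.const μ c ω| ≤ c := by
    filter_upwards [L1pLinf.coeFn_const (μ := μ) c] with ω hω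
    rw [hω, abs_of_nonneg hc]
  have hfc : f ≤ᵐ[μ] L1pLinf.const μ c := EventuallyLE.trans_eq hf (L1pLinf.coeFn_const c).symm
  filter_upwards [hU.mono hfc, hU.abs_le_const hconst] with ω hω hc
  exact hω.trans ((le_abs_self _).trans hc)

theorem lintegral_ofReal_le (hU : IsDunfordSchwartz U) (f : L1pLinf μ) :
    ∫⁻ ω, ENNReal.ofReal (U f ω) ∂μ ≤ ∫⁻ ω, ENNReal.ofReal (f ω) ∂μ := by
  have hle : f ≤ᵐ[μ] L1pLinf.posPart f :=
    (L1pLinf.coeFn_posPart f).mono fun ω hω => hω ▸ le_max_left _ _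
  calc ∫⁻ ω, ENNReal.ofReal (U f ω) ∂μ
      ≤ ∫⁻ ω, ‖U (L1pLinf.posPart f) ω‖ₑ ∂μ := by
        refine lintegral_mono_ae ((hU.mono hle).mono fun ω hω => ?_)
        rw [Real.enorm_eq_ofReal_abs]
        exact ofReal_le_ofReal (hω.trans (le_abs_self _))
    _ ≤ ∫⁻ ω, ‖L1pLinf.posPart f ω‖ₑ ∂μ := by
        simpa only [eLpNorm_one_eq_lintegral_enorm] using hU.eLpNorm_one_le (L1pLinf.posPart f)
    _ = ∫⁻ ω, ENNReal.ofReal (f ω) ∂μ := by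
        refine lintegral_congr_ae ((L1pLinf.coeFn_posPart f).mono fun ω hω => ?_)
        simp only [hω, Real.enorm_eq_ofReal (le_max_right _ _), ENNReal.ofReal_max,
          ENNReal.ofReal_zero, max_zero]

theorem lintegral_ofReal_abs_sub_le (hU : IsDunfordSchwartz U) {c : ℝ} (hc : 0 ≤ c)
    (f : L1pLinf μ) :
    ∫⁻ ω, ENNReal.ofReal (|U f ω| - c) ∂μ ≤ ∫⁻ ω, ENNReal.ofReal (|f ω| - c) ∂μ := by
  let q := L1pLinf.abs f - L1pLinf.const μ c
  have hq : ∀ᵐ ω ∂μ, q ω = |f ω| - c := by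
    filter_upwards [L1pLinf.coeFn_sub (L1pLinf.abs f) (L1pLinf.const μ c), L1pLinf.coeFn_abs f,
      L1pLinf.coeFn_const (μ := μ) c] with ω hsub habs hconst
    rw [hsub, Pi.sub_apply, habs, hconst]
  have hle : ∀ᵐ ω ∂μ, |U f ω| - c ≤ U q ω := by
    filter_upwards [hU.abs_le (L1pLinf.coeFn_abs f).symm.le,
      hU.le_const hc (L1pLinf.coeFn_const (μ := μ) c).le,
      L1pLinf.coeFn_sub (U (L1pLinf.abs f)) (U (L1pLinf.const μ c))] with ω habs hconst hsub
    rw [map_sub, hsub, Pi.sub_apply]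
    linarith
  calc ∫⁻ ω, ENNReal.ofReal (|U f ω| - c) ∂μ
      ≤ ∫⁻ ω, ENNReal.ofReal (U q ω) ∂μ :=
        lintegral_mono_ae (hle.mono fun ω hω => ofReal_le_ofReal hω)
    _ ≤ ∫⁻ ω, ENNReal.ofReal (q ω) ∂μ := hU.lintegral_ofReal_le q
    _ = ∫⁻ ω, ENNReal.ofReal (|f ω| - c) ∂μ :=
        lintegral_congr_ae (hq.mono fun ω hω => congrArg ENNReal.ofReal hω)

/-- Jensen's inequality for `x ↦ x²`, the supremum of the affine functions `2 a x - a²` with `a`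
rational. -/
theorem sq_le (hU : IsDunfordSchwartz U) (hfg : ∀ᵐ ω ∂μ, f ω ^ 2 ≤ g ω) :
    ∀ᵐ ω ∂μ, U f ω ^ 2 ≤ U g ω := by
  have hsub : ∀ a : ℝ, ⇑((2 * a) • f - g) =ᵐ[μ] fun ω => 2 * a * f ω - g ω := fun a => by
    filter_upwards [L1pLinf.coeFn_sub ((2 * a) • f) g, L1pLinf.coeFn_smul (2 * a) f]
      with ω hsub hsmul
    rw [hsub, Pi.sub_apply, hsmul, Pi.smul_apply, smul_eq_mul]
  have haffine : ∀ a : ℝ, ∀ᵐ ω ∂μ, 2 * a * U f ω - U g ω ≤ a ^ 2 := fun a => by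
    have hle := hU.le_const (f := (2 * a) • f - g) (sq_nonneg a) <| by
      filter_upwards [hfg, hsub a] with ω hω hsub
      rw [hsub]
      nlinarith [sq_nonneg (a - f ω)]
    rw [map_sub, map_smul] at hle
    filter_upwards [hle, L1pLinf.coeFn_sub ((2 * a) • U f) (U g),
      L1pLinf.coeFn_smul (2 * a) (U f)] with ω hle hsub hsmul
    rwa [hsub, Pi.sub_apply, hsmul, Pi.smul_apply, smul_eq_mul] at hle
  filter_upwards [ae_all_iff.2 fun a : ℚ => haffine a] with ω hω
  have hclosed : IsClosed {a : ℝ | 2 * a * U f ω - U g ω ≤ a ^ 2} :=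
    isClosed_le (by fun_prop) (by fun_prop)
  have := Rat.denseRange_cast.induction_on
    (p := fun a : ℝ => 2 * a * U f ω - U g ω ≤ a ^ 2) (U f ω) hclosed hω
  nlinarith

theorem eLpNorm_two_le (hU : IsDunfordSchwartz U) (f : L1pLinf μ) :
    eLpNorm (U f) 2 μ ≤ eLpNorm f 2 μ := by
  rcases eq_or_ne (eLpNorm f 2 μ) ∞ with htop | hfin
  · exact htop ▸ le_top
  obtain ⟨g, hg⟩ := L1pLinf.exists_coeFn_eq_sq ⟨L1pLinf.aestronglyMeasurable f, hfin.lt_top⟩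
  rw [← ENNReal.pow_le_pow_left_iff two_ne_zero, sq_eLpNorm_two, sq_eLpNorm_two]
  calc ∫⁻ ω, ENNReal.ofReal (U f ω ^ 2) ∂μ
      ≤ ∫⁻ ω, ENNReal.ofReal (U g ω) ∂μ :=
        lintegral_mono_ae ((hU.sq_le hg.symm.le).mono fun ω hω => ofReal_le_ofReal hω)
    _ ≤ ∫⁻ ω, ENNReal.ofReal (g ω) ∂μ := hU.lintegral_ofReal_le g
    _ = ∫⁻ ω, ENNReal.ofReal (f ω ^ 2) ∂μ :=
        lintegral_congr_ae (hg.mono fun ω hω => congrArg ENNReal.ofReal hω)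

end IsDunfordSchwartz

/-! ### Hopf's maximal inequality -/

/-- The iterates `M₀ = 0`, `M_{n+1} = (q + U M_n - lam)⁺` of Garsia's proof of Hopf's
maximal inequality; `M_n` is an upper bound of `∑_{j<m} U^j q - m lam` for all `m ≤ n`. -/
noncomputable def hopfIter {μ : Measure Ω} (U : Module.End ℝ (L1pLinf μ)) (q : L1pLinf μ)
    (lam : ℝ) : ℕ → L1pLinf μ
  | 0 => 0
  | n + 1 => L1pLinf.posPart (q + U (hopfIter U q lam n) - L1pLinf.const μ lam)

section Hopf

variable {μ : Measure Ω} {U : Module.End ℝ (L1pLinf μ)} {q : L1pLinf μ} {lam : ℝ}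

theorem hopfIter_succ_ae (U : Module.End ℝ (L1pLinf μ)) (q : L1pLinf μ) (lam : ℝ) (n : ℕ) :
    ∀ᵐ ω ∂μ, hopfIter U q lam (n + 1) ω = max (q ω + U (hopfIter U q lam n) ω - lam) 0 := by
  filter_upwards [L1pLinf.coeFn_posPart (q + U (hopfIter U q lam n) - L1pLinf.const μ lam),
    L1pLinf.coeFn_sub (q + U (hopfIter U q lam n)) (L1pLinf.const μ lam),
    L1pLinf.coeFn_add q (U (hopfIter U q lam n)), L1pLinf.coeFn_const (μ := μ) lam]
    with ω hpos hsub hadd hconst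
  rw [hopfIter, hpos, hsub, Pi.sub_apply, hadd, Pi.add_apply, hconst]

theorem hopfIter_nonneg (U : Module.End ℝ (L1pLinf μ)) (q : L1pLinf μ) (lam : ℝ) :
    ∀ n, 0 ≤ᵐ[μ] hopfIter U q lam n
  | 0 => L1pLinf.coeFn_zero.symm.le
  | n + 1 => by
    filter_upwards [hopfIter_succ_ae U q lam n] with ω hω
    exact hω ▸ le_max_right _ _

namespace IsDunfordSchwartz

theorem hopfIter_le_succ (hU : IsDunfordSchwartz U) (q : L1pLinf μ) (lam : ℝ) :
    ∀ n, hopfIter U q lam n ≤ᵐ[μ] hopfIter U q lam (n + 1)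
  | 0 => L1pLinf.coeFn_zero.le.trans (hopfIter_nonneg U q lam 1)
  | n + 1 => by
    filter_upwards [hU.mono (hU.hopfIter_le_succ q lam n), hopfIter_succ_ae U q lam n,
      hopfIter_succ_ae U q lam (n + 1)] with ω hmono hn hn'
    rw [hn, hn']
    gcongr

theorem hopfIter_le_of_le (hU : IsDunfordSchwartz U) {m n : ℕ} (hmn : m ≤ n) :
    hopfIter U q lam m ≤ᵐ[μ] hopfIter U q lam n := by
  induction n, hmn using Nat.le_induction with
  | base => exact EventuallyLE.rfl
  | succ n _ ih => exact ih.trans (hU.hopfIter_le_succ q lam n)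

theorem lintegral_hopfIter_ne_top (hU : IsDunfordSchwartz U)
    (hq : ∫⁻ ω, ENNReal.ofReal (q ω) ∂μ ≠ ∞) (hlam : 0 ≤ lam) :
    ∀ n, ∫⁻ ω, ENNReal.ofReal (hopfIter U q lam n ω) ∂μ ≠ ∞
  | 0 => by
    have hzero : (fun ω => ENNReal.ofReal (hopfIter U q lam 0 ω)) =ᵐ[μ] 0 := by
      filter_upwards [L1pLinf.coeFn_zero (μ := μ)] with ω hω
      simp only [hopfIter, hω, Pi.zero_apply, ofReal_zero]
    simp [lintegral_congr_ae hzero]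
  | n + 1 => by
    have hle : ∫⁻ ω, ENNReal.ofReal (hopfIter U q lam (n + 1) ω) ∂μ
        ≤ ∫⁻ ω, ENNReal.ofReal (q ω) + ENNReal.ofReal (U (hopfIter U q lam n) ω) ∂μ := by
      refine lintegral_mono_ae ?_
      filter_upwards [hopfIter_succ_ae U q lam n] with ω hω
      rw [hω, ofReal_max, ofReal_zero, max_zero]
      exact (ofReal_le_ofReal (sub_le_self _ hlam)).trans ofReal_add_le
    rw [lintegral_add_left (L1pLinf.measurable q).ennreal_ofReal] at hle
    exact ne_top_of_le_ne_top (add_ne_top.2 ⟨hq, ne_top_of_le_ne_top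
      (hU.lintegral_hopfIter_ne_top hq hlam n) (hU.lintegral_ofReal_le _)⟩) hle

theorem sum_pow_apply_le_hopfIter (hU : IsDunfordSchwartz U) (q : L1pLinf μ) (hlam : 0 ≤ lam) :
    ∀ m : ℕ, ∀ᵐ ω ∂μ,
      (∑ j ∈ Finset.range m, U ^ j) q ω ≤ hopfIter U q lam m ω + m * lam
  | 0 => ae_of_all _ fun _ => by simp [hopfIter]
  | m + 1 => by
    have hle : (∑ j ∈ Finset.range m, U ^ j) q
        ≤ᵐ[μ] ⇑(hopfIter U q lam m + L1pLinf.const μ (m * lam)) := by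
      filter_upwards [hU.sum_pow_apply_le_hopfIter q hlam m, L1pLinf.coeFn_const (μ := μ) (m * lam),
        L1pLinf.coeFn_add (hopfIter U q lam m) (L1pLinf.const μ (m * lam))]
        with ω hω hconst hadd
      rw [hadd, Pi.add_apply, hconst]
      exact hω
    have hUle := hU.mono hle
    have hconst : U (L1pLinf.const μ (m * lam)) ≤ᵐ[μ] fun _ => m * lam :=
      hU.le_const (by positivity) (L1pLinf.coeFn_const _).le
    have hsum : (∑ j ∈ Finset.range (m + 1), U ^ j) q
        = q + U ((∑ j ∈ Finset.range m, U ^ j) q) := by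
      simp only [Finset.sum_range_succ', pow_zero, pow_succ', LinearMap.add_apply,
        LinearMap.sum_apply, Module.End.mul_apply, Module.End.one_apply, map_sum, add_comm]
    rw [map_add] at hUle
    rw [hsum]
    filter_upwards [hUle, hconst, hopfIter_succ_ae U q lam m,
      L1pLinf.coeFn_add q (U ((∑ j ∈ Finset.range m, U ^ j) q)),
      L1pLinf.coeFn_add (U (hopfIter U q lam m)) (U (L1pLinf.const μ (m * lam)))]
      with ω hUle hconst hsucc hadd hadd'
    rw [hadd', Pi.add_apply] at hUle
    rw [hadd, Pi.add_apply, hsucc, Nat.cast_succ]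
    linarith [le_max_left (q ω + U (hopfIter U q lam m) ω - lam) 0]

theorem lam_mul_measure_hopfIter_pos_le (hU : IsDunfordSchwartz U) (hq : 0 ≤ᵐ[μ] q)
    (hq' : ∫⁻ ω, ENNReal.ofReal (q ω) ∂μ ≠ ∞) (hlam : 0 ≤ lam) (n : ℕ) :
    ENNReal.ofReal lam * μ {ω | 0 < hopfIter U q lam n ω} ≤ ∫⁻ ω, ENNReal.ofReal (q ω) ∂μ := by
  set M := hopfIter U q lam n
  have hM : 0 ≤ᵐ[μ] M := hopfIter_nonneg U q lam n
  have hle : ∀ᵐ ω ∂μ, ENNReal.ofReal (M ω)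
      + {ω | 0 < M ω}.indicator (fun _ => ENNReal.ofReal lam) ω
        ≤ ENNReal.ofReal (q ω) + ENNReal.ofReal (U M ω) := by
    filter_upwards [hU.hopfIter_le_succ q lam n, hopfIter_succ_ae U q lam n, hU.nonneg M hM, hq, hM]
      with ω hmono hsucc hUM hq hM
    rw [← ofReal_add hq hUM]
    by_cases hω : 0 < M ω
    · rw [indicator_of_mem (by exact hω), ← ofReal_add hω.le hlam]
      refine ofReal_le_ofReal ?_
      rw [hsucc] at hmono
      linarith [(le_max_iff.1 hmono).resolve_right (not_le.2 hω)]
    · rw [indicator_of_notMem (by exact hω), ofReal_of_nonpos (not_lt.1 hω), zero_add]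
      exact zero_le
  have hint := lintegral_mono_ae hle
  rw [lintegral_add_left (L1pLinf.measurable M).ennreal_ofReal,
    lintegral_add_left (L1pLinf.measurable q).ennreal_ofReal, lintegral_indicator_const
      (measurableSet_lt measurable_const (L1pLinf.measurable M)), add_comm] at hint
  exact (ENNReal.add_le_add_iff_right (hU.lintegral_hopfIter_ne_top hq' hlam n)).1
    (hint.trans (add_le_add le_rfl (hU.lintegral_ofReal_le M)))

theorem hopf_maximal_inequality (hU : IsDunfordSchwartz U) (hq : 0 ≤ᵐ[μ] q)
    (hq' : ∫⁻ ω, ENNReal.ofReal (q ω) ∂μ ≠ ∞) (hlam : 0 ≤ lam) :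
    ENNReal.ofReal lam * μ {ω | ∃ m : ℕ, m * lam < (∑ j ∈ Finset.range m, U ^ j) q ω}
      ≤ ∫⁻ ω, ENNReal.ofReal (q ω) ∂μ := by
  let S : ℕ → Set Ω := fun m => {ω | m * lam < (∑ j ∈ Finset.range m, U ^ j) q ω}
  have hS : ∀ n, accumulate S n ≤ᵐ[μ] {ω | 0 < hopfIter U q lam n ω} := fun n => by
    have hm : ∀ᵐ ω ∂μ, ∀ m, m ≤ n → hopfIter U q lam m ω ≤ hopfIter U q lam n ω :=
      ae_all_iff.2 fun m => eventually_imp_distrib_left.2 fun hmn => hU.hopfIter_le_of_le hmn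
    filter_upwards [hm, ae_all_iff.2 (hU.sum_pow_apply_le_hopfIter q hlam)] with ω hm hsum hω
    obtain ⟨m, hmn, hω⟩ := mem_accumulate.1 hω
    have hω : m * lam < (∑ j ∈ Finset.range m, U ^ j) q ω := hω
    change 0 < hopfIter U q lam n ω
    linarith [hm m hmn, hsum m]
  have hunion : {ω | ∃ m : ℕ, m * lam < (∑ j ∈ Finset.range m, U ^ j) q ω} = ⋃ m, S m :=
    ofPred_exists _
  rw [hunion, measure_iUnion_eq_iSup_accumulate, ENNReal.mul_iSup]
  exact iSup_le fun n => (mul_le_mul_right (measure_mono_ae (hS n)) _).trans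
    (hU.lam_mul_measure_hopfIter_pos_le hq hq' hlam n)

end IsDunfordSchwartz

end Hopf

/-! ### Brunel's polynomials -/

section Brunel

open Polynomial

/-- The polynomials with nonnegative coefficients. -/
def nonnegCoeff (R : Type*) [CommSemiring R] [PartialOrder R] [IsOrderedRing R] :
    Subsemiring R[X] where
  carrier := {p | ∀ k, 0 ≤ p.coeff k}
  mul_mem' hp hq k := by
    rw [coeff_mul]
    exact Finset.sum_nonneg fun x _ => mul_nonneg (hp _) (hq _)
  one_mem' k := by
    rw [coeff_one]
    split_ifs <;> simp
  add_mem' hp hq k := by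
    rw [coeff_add]
    exact add_nonneg (hp k) (hq k)
  zero_mem' _ := by simp

theorem C_mem_nonnegCoeff {R : Type*} [CommSemiring R] [PartialOrder R] [IsOrderedRing R] {c : R}
    (hc : 0 ≤ c) : C c ∈ nonnegCoeff R := fun k => by
  rw [coeff_C]
  split_ifs
  exacts [hc, le_rfl]

theorem choose_mul_coeff_le_coeff_add_pow {R : Type*} [CommSemiring R] [PartialOrder R]
    [IsOrderedRing R] {a b : R[X]} (ha : a ∈ nonnegCoeff R) (hb : b ∈ nonnegCoeff R) {m n : ℕ}
    (hmn : m ≤ n) (k : ℕ) :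
    n.choose m * (a ^ m * b ^ (n - m)).coeff k ≤ ((a + b) ^ n).coeff k := by
  have hmem : ∀ i, a ^ i * b ^ (n - i) * (n.choose i : R[X]) ∈ nonnegCoeff R := fun i =>
    mul_mem (mul_mem (pow_mem ha i) (pow_mem hb _)) (natCast_mem _ _)
  calc n.choose m * (a ^ m * b ^ (n - m)).coeff k
      = (a ^ m * b ^ (n - m) * (n.choose m : R[X])).coeff k := by
        rw [coeff_mul_natCast, mul_comm]
    _ ≤ ((a + b) ^ n).coeff k := by
        rw [add_pow, finsetSum_coeff]
        exact Finset.single_le_sum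
          (f := fun i => (a ^ i * b ^ (n - i) * (n.choose i : R[X])).coeff k)
          (fun i _ => hmem i k) (Finset.mem_range.2 (Nat.lt_succ_of_le hmn))

theorem markov_coeff {p : ℝ[X]} (hp : p ∈ nonnegCoeff ℝ) (k : ℕ) :
    (k + 1) * (p.eval 1 - ∑ i ∈ Finset.range (k + 1), p.coeff i) ≤ (derivative p).eval 1 := by
  have hdeg : p.natDegree < p.natDegree + (k + 1) + 1 := by omega
  have heval : p.eval 1 = ∑ i ∈ Finset.range (p.natDegree + (k + 1) + 1), p.coeff i := by
    simp [eval_eq_sum_range' hdeg]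
  have hderiv : (derivative p).eval 1
      = ∑ i ∈ Finset.range (p.natDegree + (k + 1) + 1), p.coeff i * i := by
    rw [derivative_eval, sum_over_range' _ (by simp) _ hdeg]
    simp
  have hhead : ∑ i ∈ Finset.range (k + 1), p.coeff i
      = ∑ i ∈ Finset.range (p.natDegree + (k + 1) + 1), if i < k + 1 then p.coeff i else 0 := by
    rw [← Finset.sum_filter]
    congr 1
    ext i
    simp only [Finset.mem_range, Finset.mem_filter]
    omega
  rw [heval, hderiv, hhead, ← Finset.sum_sub_distrib, Finset.mul_sum]
  refine Finset.sum_le_sum fun i _ => ?_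
  split_ifs with hi
  · rw [sub_self, mul_zero]
    exact mul_nonneg (hp i) i.cast_nonneg
  · have hi : (k : ℝ) + 1 ≤ i := by exact_mod_cast not_lt.1 hi
    rw [sub_zero, mul_comm]
    exact mul_le_mul_of_nonneg_left hi (hp i)

/-- The polynomial `1 + X + ⋯ + X^(n-1)`. -/
noncomputable def geomPoly (n : ℕ) : ℝ[X] := ∑ k ∈ Finset.range n, X ^ k

theorem coeff_geomPoly (n k : ℕ) : (geomPoly n).coeff k = if k < n then 1 else 0 := by
  simp [geomPoly, coeff_X_pow]

theorem geomPoly_mem_nonnegCoeff (n : ℕ) : geomPoly n ∈ nonnegCoeff ℝ := fun k => by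
  rw [coeff_geomPoly]
  split_ifs <;> norm_num

theorem eval_one_geomPoly (n : ℕ) : (geomPoly n).eval 1 = n := by
  simp [geomPoly, eval_finsetSum]

theorem eval_one_derivative_geomPoly_le (n : ℕ) :
    (derivative (geomPoly n)).eval 1 ≤ (n : ℝ) ^ 2 / 2 := by
  have heval : (derivative (geomPoly n)).eval 1 = ((∑ k ∈ Finset.range n, k : ℕ) : ℝ) := by
    simp [geomPoly, eval_finsetSum, derivative_X_pow]
  have hle : (∑ k ∈ Finset.range n, k) * 2 ≤ n ^ 2 := by
    rw [Finset.sum_range_id_mul_two, sq]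
    exact Nat.mul_le_mul_left _ (Nat.sub_le _ _)
  rw [heval, le_div_iff₀ two_pos]
  exact_mod_cast hle

theorem coeff_geomPoly_mul {n k : ℕ} (hk : k < n) (p : ℝ[X]) :
    (geomPoly n * p).coeff k = ∑ i ∈ Finset.range (k + 1), p.coeff i := by
  rw [mul_comm, coeff_mul, Finset.Nat.sum_antidiagonal_eq_sum_range_succ_mk]
  refine Finset.sum_congr rfl fun i _ => ?_
  rw [coeff_geomPoly, if_pos ((Nat.sub_le _ _).trans_lt hk), mul_one]

/-- The generating polynomial of the mass `2^{-(r+1)}` spread uniformly over the integers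
`0, …, 2^{(d+2)r} - 1`. -/
noncomputable def dyadicBlock (d r : ℕ) : ℝ[X] :=
  C ((1 / 2) ^ (r + 1) * (1 / 2) ^ ((d + 2) * r)) * geomPoly (2 ^ ((d + 2) * r))

/-- The generating polynomial of Brunel's heavy-tailed law, truncated to its first `N` dyadic
blocks. The convolution powers of the `d`-fold product of this law add up to a multiple of the
uniform law on any cube of `ℕ^d`. -/
noncomputable def brunelPoly (d N : ℕ) : ℝ[X] := ∑ r ∈ Finset.range N, dyadicBlock d r

theorem dyadicBlock_mem_nonnegCoeff (d r : ℕ) : dyadicBlock d r ∈ nonnegCoeff ℝ :=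
  mul_mem (C_mem_nonnegCoeff (by positivity)) (geomPoly_mem_nonnegCoeff _)

theorem brunelPoly_mem_nonnegCoeff (d N : ℕ) : brunelPoly d N ∈ nonnegCoeff ℝ :=
  sum_mem fun r _ => dyadicBlock_mem_nonnegCoeff d r

theorem eval_one_dyadicBlock (d r : ℕ) : (dyadicBlock d r).eval 1 = (1 / 2) ^ (r + 1) := by
  rw [dyadicBlock, eval_mul, eval_C, eval_one_geomPoly, Nat.cast_pow, mul_assoc, Nat.cast_two,
    ← mul_pow, one_div_mul_cancel two_ne_zero, one_pow, mul_one]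

theorem eval_one_brunelPoly (d N : ℕ) : (brunelPoly d N).eval 1 = 1 - (1 / 2) ^ N := by
  simp only [brunelPoly, eval_finsetSum, eval_one_dyadicBlock]
  induction N with
  | zero => simp
  | succ n ih => rw [Finset.sum_range_succ, ih]; ring

theorem eval_one_derivative_dyadicBlock_le (d r : ℕ) :
    (derivative (dyadicBlock d r)).eval 1 ≤ 1 / 4 * (2 ^ (d + 1)) ^ r := by
  rw [dyadicBlock, derivative_C_mul, eval_mul, eval_C]
  calc _ ≤ ((1 / 2 : ℝ) ^ (r + 1) * (1 / 2) ^ ((d + 2) * r))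
          * (((2 ^ ((d + 2) * r) : ℕ) : ℝ) ^ 2 / 2) :=
        mul_le_mul_of_nonneg_left (eval_one_derivative_geomPoly_le _) (by positivity)
    _ = 1 / 4 * (1 / 2 * 2) ^ r * (1 / 2 * 2) ^ ((d + 2) * r) * (2 ^ (d + 1)) ^ r := by
        push_cast
        simp only [one_div_pow]
        field_simp
        ring
    _ = 1 / 4 * (2 ^ (d + 1)) ^ r := by norm_num

theorem geom_sum_le_two_mul_pow {x : ℝ} (hx : 2 ≤ x) (r : ℕ) :
    ∑ i ∈ Finset.range (r + 1), x ^ i ≤ 2 * x ^ r := by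
  induction r with
  | zero => simp
  | succ r ih =>
    have : 0 ≤ x ^ r := by positivity
    rw [Finset.sum_range_succ, pow_succ]
    nlinarith

theorem eval_one_derivative_brunelPoly_succ_le (d r : ℕ) :
    (derivative (brunelPoly d (r + 1))).eval 1 ≤ 1 / 2 * (2 ^ (d + 1)) ^ r := by
  have htwo : (2 : ℝ) ≤ 2 ^ (d + 1) := le_self_pow₀ one_le_two d.succ_ne_zero
  rw [brunelPoly, derivative_sum, eval_finsetSum]
  calc _ ≤ ∑ i ∈ Finset.range (r + 1), 1 / 4 * ((2 : ℝ) ^ (d + 1)) ^ i :=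
        Finset.sum_le_sum fun i _ => eval_one_derivative_dyadicBlock_le d i
    _ ≤ 1 / 2 * (2 ^ (d + 1)) ^ r := by
        rw [← Finset.mul_sum]
        linarith [geom_sum_le_two_mul_pow htwo r]

theorem eval_one_derivative_brunelPoly_pow_le (d r j : ℕ) :
    (derivative (brunelPoly d (r + 1) ^ j)).eval 1 ≤ j * (1 / 2 * (2 ^ (d + 1)) ^ r) := by
  have hmem : (1 / 2 : ℝ) ^ (r + 1) ≤ 1 := pow_le_one₀ (by norm_num) (by norm_num)
  have hle : (1 - (1 / 2 : ℝ) ^ (r + 1)) ^ (j - 1) ≤ 1 :=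
    pow_le_one₀ (sub_nonneg.2 hmem) (sub_le_self _ (by positivity))
  rw [derivative_pow, eval_mul, eval_mul, eval_C, eval_pow, eval_one_brunelPoly]
  calc _ ≤ j * (1 - (1 / 2 : ℝ) ^ (r + 1)) ^ (j - 1) * (1 / 2 * (2 ^ (d + 1)) ^ r) :=
        mul_le_mul_of_nonneg_left (eval_one_derivative_brunelPoly_succ_le d r)
          (mul_nonneg j.cast_nonneg (pow_nonneg (sub_nonneg.2 hmem) _))
    _ ≤ j * (1 / 2 * (2 ^ (d + 1)) ^ r) := by
        gcongr
        exact mul_le_of_le_one_right j.cast_nonneg hle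

/-- Bernoulli's inequality bounds the total mass from below by `3/4`, Markov's the tail by
`1/4`. -/
theorem half_le_sum_coeff_brunelPoly_pow {d r j k : ℕ} (hk : 2 ^ ((d + 2) * r) ≤ k)
    (hj : 4 * j ≤ 2 ^ (r + 1)) :
    1 / 2 ≤ ∑ i ∈ Finset.range (k + 1), (brunelPoly d (r + 1) ^ j).coeff i := by
  set a := brunelPoly d (r + 1)
  have hpow : (1 / 2 : ℝ) ^ (r + 1) ≤ 1 := pow_le_one₀ (by norm_num) (by norm_num)
  have hjr : j * (1 / 2 : ℝ) ^ (r + 1) ≤ 1 / 4 := by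
    have hj : 4 * (j : ℝ) ≤ 2 ^ (r + 1) := by exact_mod_cast hj
    rw [one_div_pow, mul_one_div, div_le_iff₀ (by positivity)]
    linarith
  have hmass : 3 / 4 ≤ (a ^ j).eval 1 := by
    have hbernoulli := one_add_mul_le_pow (a := -(1 / 2 : ℝ) ^ (r + 1)) (by linarith) j
    rw [← sub_eq_add_neg] at hbernoulli
    rw [eval_pow, eval_one_brunelPoly]
    linarith
  have htail : (a ^ j).eval 1 - ∑ i ∈ Finset.range (k + 1), (a ^ j).coeff i
      ≤ j * (1 / 2 : ℝ) ^ (r + 1) := by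
    have hk : (2 : ℝ) ^ ((d + 2) * r) ≤ k + 1 := by exact_mod_cast hk.trans k.le_succ
    refine le_of_mul_le_mul_left ?_ (by positivity : (0 : ℝ) < k + 1)
    calc _ ≤ j * (1 / 2 * ((2 : ℝ) ^ (d + 1)) ^ r) :=
          (markov_coeff (pow_mem (brunelPoly_mem_nonnegCoeff d (r + 1)) j) k).trans
            (eval_one_derivative_brunelPoly_pow_le d r j)
      _ = 2 ^ ((d + 2) * r) * (j * (1 / 2 : ℝ) ^ (r + 1)) := by
          rw [one_div_pow]
          field_simp
          ring
      _ ≤ (k + 1) * (j * (1 / 2 : ℝ) ^ (r + 1)) := by gcongr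
  linarith

theorem le_coeff_brunelPoly_pow {d N r k j : ℕ} (hr : r < N) (hk : k < 2 ^ ((d + 2) * r))
    (hk' : ∀ s, r = s + 1 → 2 ^ ((d + 2) * s) ≤ k) (hj : 4 * j ≤ 2 ^ r) :
    (j + 1) * (1 / 4) * (1 / 2) ^ ((d + 3) * r) ≤ (brunelPoly d N ^ (j + 1)).coeff k := by
  have hhead := brunelPoly_mem_nonnegCoeff d r
  have hblock := dyadicBlock_mem_nonnegCoeff d r
  have hhalf : 1 / 2 ≤ ∑ i ∈ Finset.range (k + 1), (brunelPoly d r ^ j).coeff i := by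
    rcases r with - | r
    · obtain rfl : j = 0 := by omega
      rw [pow_zero, Finset.sum_range_succ', coeff_one_zero]
      have : 0 ≤ ∑ i ∈ Finset.range k, (1 : ℝ[X]).coeff (i + 1) :=
        Finset.sum_nonneg fun i _ => one_mem (nonnegCoeff ℝ) (i + 1)
      linarith
    · exact half_le_sum_coeff_brunelPoly_pow (hk' r rfl) hj
  calc ((j : ℝ) + 1) * (1 / 4) * (1 / 2) ^ ((d + 3) * r)
      = (j + 1) * ((1 / 2) ^ (r + 1) * (1 / 2) ^ ((d + 2) * r) * (1 / 2)) := by ring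
    _ ≤ (j + 1) * ((1 / 2) ^ (r + 1) * (1 / 2) ^ ((d + 2) * r)
          * ∑ i ∈ Finset.range (k + 1), (brunelPoly d r ^ j).coeff i) := by gcongr
    _ = (j + 1).choose j * (brunelPoly d r ^ j * dyadicBlock d r ^ (j + 1 - j)).coeff k := by
        rw [Nat.choose_succ_self_right, Nat.cast_succ, Nat.add_sub_cancel_left, pow_one, mul_comm
          (brunelPoly d r ^ j), dyadicBlock, mul_assoc (C _), coeff_C_mul, coeff_geomPoly_mul hk]
    _ ≤ ((brunelPoly d r + dyadicBlock d r) ^ (j + 1)).coeff k :=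
        choose_mul_coeff_le_coeff_add_pow hhead hblock j.le_succ k
    _ ≤ ((brunelPoly d r + dyadicBlock d r + ∑ i ∈ Finset.Ico (r + 1) N, dyadicBlock d i)
          ^ (j + 1)).coeff k := by
        simpa using choose_mul_coeff_le_coeff_add_pow (add_mem hhead hblock)
          (sum_mem fun i _ => dyadicBlock_mem_nonnegCoeff d i) (le_refl (j + 1)) k
    _ = (brunelPoly d N ^ (j + 1)).coeff k := by
        rw [brunelPoly, ← Finset.sum_range_succ, Finset.sum_range_add_sum_Ico _ hr, brunelPoly]

theorem exists_dyadic_level {D L k : ℕ} (hk : k < 2 ^ (D * L)) :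
    ∃ r ≤ L, k < 2 ^ (D * r) ∧ ∀ s, r = s + 1 → 2 ^ (D * s) ≤ k := by
  classical
  have hex : ∃ r, k < 2 ^ (D * r) := ⟨L, hk⟩
  exact ⟨Nat.find hex, Nat.find_min' hex hk, Nat.find_spec hex,
    fun s hs => not_lt.1 (Nat.find_min hex (hs ▸ s.lt_succ_self))⟩

theorem exists_le_and_sum_add_le {ι : Type*} [Fintype ι] {L : ℕ} {r : ι → ℕ}
    (hr : ∀ i, r i ≤ L) :
    ∃ m ≤ L, (∀ i, m ≤ r i) ∧ ∑ i, r i + L ≤ m + Fintype.card ι * L := by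
  classical
  cases isEmpty_or_nonempty ι with
  | inl h => exact ⟨L, le_rfl, h.elim, by simp⟩
  | inr h =>
    obtain ⟨i₀, hi₀⟩ := Finite.exists_min r
    refine ⟨r i₀, hr i₀, hi₀, ?_⟩
    calc ∑ i, r i + L = r i₀ + (∑ i ∈ Finset.univ.erase i₀, r i + L) := by
          rw [← Finset.add_sum_erase _ _ (Finset.mem_univ i₀), add_assoc]
      _ ≤ r i₀ + (∑ _i ∈ Finset.univ.erase i₀, L + L) := by
          gcongr
          exact hr _
      _ = r i₀ + Fintype.card ι * L := by
          rw [Finset.sum_erase_add _ _ (Finset.mem_univ i₀), Finset.sum_const, smul_eq_mul,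
            Finset.card_univ]

theorem pow_succ_div_le_sum_range_pow (d M : ℕ) :
    (M : ℝ) ^ (d + 1) / (d + 1) ≤ ∑ j ∈ Finset.range M, ((j : ℝ) + 1) ^ d := by
  have hmono : MonotoneOn (fun x : ℝ => x ^ d) (Icc 0 (0 + M)) :=
    fun x hx _ _ hxy => pow_le_pow_left₀ hx.1 hxy d
  simpa [integral_pow] using hmono.integral_le_sum

/-- The constant in the domination of cube averages by powers of a Brunel operator. -/
noncomputable def brunelConst (d : ℕ) : ℝ := (1 / 4) ^ (2 * d + 1) / (d + 1)

theorem brunelConst_pos (d : ℕ) : 0 < brunelConst d := by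
  unfold brunelConst
  positivity

theorem brunelConst_mul_le_sum_range_pow {d L m s : ℕ} (hs : s + L ≤ m + d * L) (hm : m ≤ L) :
    brunelConst d * 2 ^ L * ((1 / 2) ^ ((d + 2) * L)) ^ d
      ≤ (∑ j ∈ Finset.range (2 ^ m / 4 + 1), ((j : ℝ) + 1) ^ d)
        * ((1 / 4) ^ d * (1 / 2) ^ ((d + 3) * s)) := by
  have hexp : (d + 3) * s + L ≤ m * (d + 1) + (d + 2) * L * d := by nlinarith
  have hpow : (2 : ℝ) ^ L * ((1 / 2) ^ ((d + 2) * L)) ^ d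
      ≤ 2 ^ (m * (d + 1)) * (1 / 2) ^ ((d + 3) * s) := by
    rw [← pow_mul, one_div_pow, one_div_pow, mul_one_div, mul_one_div,
      div_le_div_iff₀ (by positivity) (by positivity), ← pow_add, ← pow_add]
    exact pow_le_pow_right₀ one_le_two (by omega)
  have hM : (2 : ℝ) ^ m / 4 ≤ (2 ^ m / 4 + 1 : ℕ) := by
    rw [div_le_iff₀ (by norm_num)]
    exact_mod_cast (by omega : 2 ^ m ≤ (2 ^ m / 4 + 1) * 4)
  calc brunelConst d * 2 ^ L * ((1 / 2) ^ ((d + 2) * L)) ^ d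
      ≤ brunelConst d * (2 ^ (m * (d + 1)) * (1 / 2) ^ ((d + 3) * s)) := by
        rw [mul_assoc]
        exact mul_le_mul_of_nonneg_left hpow (brunelConst_pos d).le
    _ = ((2 : ℝ) ^ m / 4) ^ (d + 1) / (d + 1) * ((1 / 4) ^ d * (1 / 2) ^ ((d + 3) * s)) := by
        rw [brunelConst]
        ring
    _ ≤ _ := by
        gcongr
        exact (by gcongr : _ ≤ _).trans (pow_succ_div_le_sum_range_pow d _)

theorem brunelConst_mul_le_sum_prod_coeff {d L N : ℕ} (hN : L < N) {κ : Fin d → ℕ}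
    (hκ : ∀ i, κ i < 2 ^ ((d + 2) * L)) :
    brunelConst d * 2 ^ L * ((1 / 2) ^ ((d + 2) * L)) ^ d
      ≤ ∑ j ∈ Finset.range (2 ^ L), ∏ i, (brunelPoly d N ^ (j + 1)).coeff (κ i) := by
  choose r hrL hκr hrκ using fun i => exists_dyadic_level (hκ i)
  obtain ⟨m, hmL, hmr, hsum⟩ := exists_le_and_sum_add_le hrL
  rw [Fintype.card_fin] at hsum
  have hM : 2 ^ m / 4 + 1 ≤ 2 ^ L := by
    have hpos : 1 ≤ 2 ^ m := Nat.one_le_two_pow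
    have hle : 2 ^ m ≤ 2 ^ L := Nat.pow_le_pow_right two_pos hmL
    omega
  have hcoeff : ∀ j ∈ Finset.range (2 ^ m / 4 + 1),
      ((j : ℝ) + 1) ^ d * ((1 / 4) ^ d * (1 / 2) ^ ((d + 3) * ∑ i, r i))
        ≤ ∏ i, (brunelPoly d N ^ (j + 1)).coeff (κ i) := fun j hj => by
    have hj : 4 * j ≤ 2 ^ m := by have := Finset.mem_range.1 hj; omega
    calc ((j : ℝ) + 1) ^ d * ((1 / 4) ^ d * (1 / 2) ^ ((d + 3) * ∑ i, r i))
        = ∏ i : Fin d, (((j : ℝ) + 1) * (1 / 4) * (1 / 2) ^ ((d + 3) * r i)) := by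
          rw [Finset.prod_mul_distrib, Finset.prod_const, Finset.prod_pow_eq_pow_sum,
            ← Finset.mul_sum, Finset.card_univ, Fintype.card_fin, mul_pow, mul_assoc]
      _ ≤ ∏ i, (brunelPoly d N ^ (j + 1)).coeff (κ i) :=
          Finset.prod_le_prod (fun i _ => by positivity) fun i _ =>
            le_coeff_brunelPoly_pow ((hrL i).trans_lt hN) (hκr i) (hrκ i)
              (hj.trans (Nat.pow_le_pow_right two_pos (hmr i)))
  calc brunelConst d * 2 ^ L * ((1 / 2) ^ ((d + 2) * L)) ^ d
      ≤ ∑ j ∈ Finset.range (2 ^ m / 4 + 1),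
          ((j : ℝ) + 1) ^ d * ((1 / 4) ^ d * (1 / 2) ^ ((d + 3) * ∑ i, r i)) := by
        rw [← Finset.sum_mul]
        exact brunelConst_mul_le_sum_range_pow hsum hmL
    _ ≤ ∑ j ∈ Finset.range (2 ^ m / 4 + 1), ∏ i, (brunelPoly d N ^ (j + 1)).coeff (κ i) :=
        Finset.sum_le_sum hcoeff
    _ ≤ ∑ j ∈ Finset.range (2 ^ L), ∏ i, (brunelPoly d N ^ (j + 1)).coeff (κ i) :=
        Finset.sum_le_sum_of_subset_of_nonneg (Finset.range_subset_range.2 hM) fun j _ _ =>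
          Finset.prod_nonneg fun i _ =>
            pow_mem (brunelPoly_mem_nonnegCoeff d N) (j + 1) (κ i)

end Brunel

/-! ### Maximal inequality for discrete cube averages -/

section OpProd

open Polynomial

variable {ι A : Type*} [Fintype ι] [DecidableEq ι] [Semiring A] [Algebra ℝ A]

/-- The element `∏ i, p i (T i)` of `A`, where the `T i` are the commuting generators of the
semigroup `τ` indexed by `ℕ^ι`. -/
noncomputable def opProd (τ : Multiplicative (ι → ℕ) →* A) (p : ι → ℝ[X]) : A :=
  AddMonoidAlgebra.lift ℝ A (ι → ℕ) τ
    (∏ i, aeval (AddMonoidAlgebra.of ℝ (ι → ℕ) (Multiplicative.ofAdd (Pi.single i 1))) (p i))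

theorem opProd_mul (τ : Multiplicative (ι → ℕ) →* A) (p q : ι → ℝ[X]) :
    opProd τ (p * q) = opProd τ p * opProd τ q := by
  simp only [opProd, Pi.mul_apply, map_mul, Finset.prod_mul_distrib]

theorem opProd_pow (τ : Multiplicative (ι → ℕ) →* A) (p : ι → ℝ[X]) (j : ℕ) :
    opProd τ (p ^ j) = opProd τ p ^ j := by
  simp only [opProd, Pi.pow_apply, map_pow, Finset.prod_pow]

theorem opProd_eq_sum (τ : Multiplicative (ι → ℕ) →* A) {p : ι → ℝ[X]} {R : ℕ}
    (hR : ∀ i, (p i).natDegree < R) :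
    opProd τ p = ∑ κ ∈ Fintype.piFinset fun _ : ι => Finset.range R,
      (∏ i, (p i).coeff (κ i)) • τ (Multiplicative.ofAdd κ) := by
  have hmonomial : ∀ κ : ι → ℕ,
      ∏ i, Multiplicative.ofAdd (Pi.single (M := fun _ => ℕ) i 1) ^ κ i
        = Multiplicative.ofAdd κ := fun κ => by
    simp only [← ofAdd_nsmul, ← ofAdd_sum, ← Pi.single_smul, nsmul_one, Nat.cast_id,
      Finset.univ_sum_single]
  simp only [opProd, aeval_eq_sum_range' (hR _), Finset.prod_univ_sum, map_sum,
    Finset.prod_smul, map_smul, ← map_pow, ← map_prod, hmonomial, AddMonoidAlgebra.lift_of]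

end OpProd

section CubeAverages

open Polynomial

theorem prod_coeff_geomPoly {ι : Type*} [Fintype ι] (n : ℕ) (κ : ι → ℕ) :
    ∏ i, (C (1 / (n : ℝ)) * geomPoly n).coeff (κ i)
      = if ∀ i, κ i < n then (1 / (n : ℝ)) ^ Fintype.card ι else 0 := by
  simp only [coeff_C_mul, coeff_geomPoly, mul_ite, mul_one, mul_zero]
  split_ifs with h
  · rw [Finset.prod_congr rfl fun i _ => if_pos (h i), Finset.prod_const, Finset.card_univ]
  · obtain ⟨i, hi⟩ := not_forall.1 h
    exact Finset.prod_eq_zero (Finset.mem_univ i) (if_neg hi)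

variable {μ : Measure Ω} {ι : Type*} [Fintype ι] [DecidableEq ι]
  {τ : Multiplicative (ι → ℕ) →* Module.End ℝ (L1pLinf μ)}

theorem isDunfordSchwartz_opProd (hτ : ∀ κ, IsDunfordSchwartz (τ κ)) {p : ι → ℝ[X]}
    (hp : ∀ i, p i ∈ nonnegCoeff ℝ) (hp' : ∀ i, (p i).eval 1 ≤ 1) :
    IsDunfordSchwartz (opProd τ p) := by
  have hR : ∀ i, (p i).natDegree < Finset.univ.sup (fun i => (p i).natDegree) + 1 := fun i =>
    Nat.lt_succ_of_le (Finset.le_sup (f := fun i => (p i).natDegree) (Finset.mem_univ i))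
  rw [opProd_eq_sum τ hR]
  refine IsDunfordSchwartz.sum_smul (fun κ _ => Finset.prod_nonneg fun i _ => hp i _) ?_
    fun κ _ => hτ _
  rw [← Finset.prod_univ_sum (fun _ => Finset.range _) fun i k => (p i).coeff k]
  refine Finset.prod_le_one (fun i _ => Finset.sum_nonneg fun k _ => hp i k) fun i _ => ?_
  simpa [eval_eq_sum_range' (hR i)] using hp' i

theorem opProd_apply_le_sum (hτ : ∀ κ, IsDunfordSchwartz (τ κ)) {J : Finset ℕ} {c : ℝ}
    {u : ι → ℝ[X]} {p : ℕ → ι → ℝ[X]}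
    (hup : ∀ κ : ι → ℕ, c * ∏ i, (u i).coeff (κ i) ≤ ∑ j ∈ J, ∏ i, (p j i).coeff (κ i))
    {q : L1pLinf μ} (hq : 0 ≤ᵐ[μ] q) :
    ∀ᵐ ω ∂μ, c * opProd τ u q ω ≤ (∑ j ∈ J, opProd τ (p j)) q ω := by
  let R := Finset.univ.sup (fun i => (u i).natDegree)
    + J.sup (fun j => Finset.univ.sup fun i => (p j i).natDegree) + 1
  have hu : ∀ i, (u i).natDegree < R := fun i => by
    have := Finset.le_sup (f := fun i => (u i).natDegree) (Finset.mem_univ i)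
    omega
  have hp : ∀ j ∈ J, ∀ i, (p j i).natDegree < R := fun j hj i => by
    have h₁ := Finset.le_sup (f := fun i => (p j i).natDegree) (Finset.mem_univ i)
    have h₂ := Finset.le_sup (f := fun j => Finset.univ.sup fun i => (p j i).natDegree) hj
    omega
  let s := Fintype.piFinset fun _ : ι => Finset.range R
  have hsum : ∑ j ∈ J, opProd τ (p j)
      = ∑ κ ∈ s, (∑ j ∈ J, ∏ i, (p j i).coeff (κ i)) • τ (Multiplicative.ofAdd κ) := by
    simp only [Finset.sum_smul]
    rw [Finset.sum_comm]
    exact Finset.sum_congr rfl fun j hj => opProd_eq_sum τ (hp j hj)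
  have hpos : ∀ᵐ ω ∂μ, ∀ κ ∈ s, 0 ≤ τ (Multiplicative.ofAdd κ) q ω :=
    (eventually_all_finset s).2 fun κ _ => (hτ _).nonneg q hq
  rw [hsum, opProd_eq_sum τ hu]
  filter_upwards [hpos,
    IsDunfordSchwartz.coeFn_sum_smul_apply s _ (fun κ => τ (Multiplicative.ofAdd κ)) q,
    IsDunfordSchwartz.coeFn_sum_smul_apply s _ (fun κ => τ (Multiplicative.ofAdd κ)) q]
    with ω hpos hp hu
  rw [hp, hu, Finset.mul_sum]
  refine Finset.sum_le_sum fun κ hκ => ?_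
  rw [← mul_assoc]
  exact mul_le_mul_of_nonneg_right (hup κ) (hpos κ hκ)

/-- The average of the semigroup `τ` over the cube `{0, …, n-1}^ι`. -/
noncomputable def cubeAvg (τ : Multiplicative (ι → ℕ) →* Module.End ℝ (L1pLinf μ)) (n : ℕ) :
    Module.End ℝ (L1pLinf μ) :=
  opProd τ fun _ => C (1 / (n : ℝ)) * geomPoly n

theorem cubeAvg_eq_sum (τ : Multiplicative (ι → ℕ) →* Module.End ℝ (L1pLinf μ)) {n : ℕ}
    (hn : 0 < n) :
    cubeAvg τ n = (1 / (n : ℝ)) ^ Fintype.card ι •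
      ∑ κ ∈ Fintype.piFinset fun _ : ι => Finset.range n, τ (Multiplicative.ofAdd κ) := by
  have hdeg : (C (1 / (n : ℝ)) * geomPoly n).natDegree < n := by
    refine (natDegree_C_mul_le _ _).trans_lt (Nat.lt_of_le_pred hn ?_)
    refine natDegree_le_iff_coeff_eq_zero.2 fun k hk => ?_
    rw [coeff_geomPoly, if_neg (not_lt.2 (Nat.le_of_pred_lt hk))]
  rw [cubeAvg, opProd_eq_sum τ fun _ => hdeg, Finset.smul_sum]
  refine Finset.sum_congr rfl fun κ hκ => ?_
  rw [prod_coeff_geomPoly, if_pos fun i => Finset.mem_range.1 (Fintype.mem_piFinset.1 hκ i)]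

theorem C_mul_geomPoly_mem_nonnegCoeff (n : ℕ) : C (1 / (n : ℝ)) * geomPoly n ∈ nonnegCoeff ℝ :=
  mul_mem (C_mem_nonnegCoeff (by positivity)) (geomPoly_mem_nonnegCoeff n)

theorem eval_one_C_mul_geomPoly_le (n : ℕ) : (C (1 / (n : ℝ)) * geomPoly n).eval 1 ≤ 1 := by
  rw [eval_mul, eval_C, eval_one_geomPoly, one_div]
  exact inv_mul_le_one

theorem isDunfordSchwartz_cubeAvg (hτ : ∀ κ, IsDunfordSchwartz (τ κ)) (n : ℕ) :
    IsDunfordSchwartz (cubeAvg τ n) :=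
  isDunfordSchwartz_opProd hτ (fun _ => C_mul_geomPoly_mem_nonnegCoeff n)
    fun _ => eval_one_C_mul_geomPoly_le n

theorem cubeAvg_apply_le (hτ : ∀ κ, IsDunfordSchwartz (τ κ)) {m n : ℕ} (hn : 0 < n) (hnm : n ≤ m)
    {q : L1pLinf μ} (hq : 0 ≤ᵐ[μ] q) :
    ∀ᵐ ω ∂μ, cubeAvg τ n q ω ≤ ((m : ℝ) / n) ^ Fintype.card ι * cubeAvg τ m q ω := by
  have hm : 0 < m := hn.trans_le hnm
  have hle := opProd_apply_le_sum hτ (J := {0}) (c := ((n : ℝ) / m) ^ Fintype.card ι)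
    (u := fun _ => C (1 / (n : ℝ)) * geomPoly n) (p := fun _ _ => C (1 / (m : ℝ)) * geomPoly m)
    (fun κ => ?_) hq
  · rw [Finset.sum_singleton] at hle
    filter_upwards [hle] with ω hω
    rwa [← div_le_iff₀' (by positivity), div_eq_inv_mul, ← inv_pow, inv_div]
  · rw [Finset.sum_singleton, prod_coeff_geomPoly, prod_coeff_geomPoly]
    split_ifs with h₁ h₂ h₂
    · rw [← mul_pow]
      exact le_of_eq (by field_simp)
    · exact absurd (fun i => (h₁ i).trans_le hnm) h₂
    · rw [mul_zero]
      positivity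
    · rw [mul_zero]

/-- Brunel's operator `φ(T₁) ⋯ φ(T_d)`, where `φ = brunelPoly d N`. -/
noncomputable def brunelOp {d : ℕ} (τ : Multiplicative (Fin d → ℕ) →* Module.End ℝ (L1pLinf μ))
    (N : ℕ) : Module.End ℝ (L1pLinf μ) :=
  opProd τ fun _ => brunelPoly d N

variable {d : ℕ} {σ : Multiplicative (Fin d → ℕ) →* Module.End ℝ (L1pLinf μ)} {q : L1pLinf μ}
  {lam : ℝ}

theorem isDunfordSchwartz_brunelOp (hσ : ∀ κ, IsDunfordSchwartz (σ κ)) (N : ℕ) :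
    IsDunfordSchwartz (brunelOp σ N) := by
  refine isDunfordSchwartz_opProd hσ (fun _ => brunelPoly_mem_nonnegCoeff d N) fun _ => ?_
  rw [eval_one_brunelPoly]
  exact sub_le_self _ (by positivity)

theorem cubeAvg_apply_le_sum_brunelOp_pow (hσ : ∀ κ, IsDunfordSchwartz (σ κ)) {L N : ℕ}
    (hL : L < N) (hq : 0 ≤ᵐ[μ] q) :
    ∀ᵐ ω ∂μ, brunelConst d * 2 ^ L * cubeAvg σ (2 ^ ((d + 2) * L)) q ω
      ≤ (∑ j ∈ Finset.range (2 ^ L + 1), brunelOp σ N ^ j) q ω := by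
  have hle := opProd_apply_le_sum hσ (c := brunelConst d * 2 ^ L) (J := Finset.range (2 ^ L))
    (u := fun _ => C (1 / ((2 ^ ((d + 2) * L) : ℕ) : ℝ)) * geomPoly (2 ^ ((d + 2) * L)))
    (p := fun j => (fun _ => brunelPoly d N) ^ (j + 1)) (fun κ => ?_) hq
  · rw [Finset.sum_range_succ', pow_zero, LinearMap.add_apply, Module.End.one_apply]
    filter_upwards [hle, hq, L1pLinf.coeFn_add
      ((∑ j ∈ Finset.range (2 ^ L), brunelOp σ N ^ (j + 1)) q) q] with ω hω hq hadd
    simp only [opProd_pow] at hω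
    rw [hadd]
    exact le_add_of_le_of_nonneg hω hq
  · rw [prod_coeff_geomPoly]
    split_ifs with hκ
    · simpa using brunelConst_mul_le_sum_prod_coeff hL hκ
    · rw [mul_zero]
      exact Finset.sum_nonneg fun j _ => Finset.prod_nonneg fun i _ =>
        pow_mem (brunelPoly_mem_nonnegCoeff d N) (j + 1) (κ i)

theorem cubeAvg_maximal_inequality_dyadic (hσ : ∀ κ, IsDunfordSchwartz (σ κ)) (hq : 0 ≤ᵐ[μ] q)
    (hq' : ∫⁻ ω, ENNReal.ofReal (q ω) ∂μ ≠ ∞) (hlam : 0 ≤ lam) :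
    ENNReal.ofReal (brunelConst d / 2 * lam)
        * μ {ω | ∃ L : ℕ, lam < cubeAvg σ (2 ^ ((d + 2) * L)) q ω}
      ≤ ∫⁻ ω, ENNReal.ofReal (q ω) ∂μ := by
  have hc := brunelConst_pos d
  let S : ℕ → Set Ω := fun L => {ω | lam < cubeAvg σ (2 ^ ((d + 2) * L)) q ω}
  have hS : ∀ N, accumulate S N ≤ᵐ[μ] {ω | ∃ m : ℕ, m * (brunelConst d / 2 * lam)
      < (∑ j ∈ Finset.range m, brunelOp σ (N + 1) ^ j) q ω} := fun N => by
    have hle : ∀ᵐ ω ∂μ, ∀ L ∈ Finset.range (N + 1),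
        brunelConst d * 2 ^ L * cubeAvg σ (2 ^ ((d + 2) * L)) q ω
          ≤ (∑ j ∈ Finset.range (2 ^ L + 1), brunelOp σ (N + 1) ^ j) q ω :=
      (eventually_all_finset _).2 fun L hL =>
        cubeAvg_apply_le_sum_brunelOp_pow hσ (Finset.mem_range.1 hL) hq
    filter_upwards [hle] with ω hle hω
    obtain ⟨L, hL, hω⟩ := mem_accumulate.1 hω
    have hω : lam < cubeAvg σ (2 ^ ((d + 2) * L)) q ω := hω
    refine ⟨2 ^ L + 1, lt_of_le_of_lt ?_
      ((mul_lt_mul_of_pos_left hω (by positivity : 0 < brunelConst d * 2 ^ L)).trans_le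
        (hle L (Finset.mem_range.2 (Nat.lt_succ_of_le hL))))⟩
    have htwo : (1 : ℝ) ≤ 2 ^ L := one_le_pow₀ one_le_two
    push_cast
    nlinarith [mul_nonneg hc.le hlam]
  have hunion : {ω | ∃ L : ℕ, lam < cubeAvg σ (2 ^ ((d + 2) * L)) q ω} = ⋃ L, S L :=
    ofPred_exists _
  rw [hunion, measure_iUnion_eq_iSup_accumulate, ENNReal.mul_iSup]
  exact iSup_le fun N => (mul_le_mul_right (measure_mono_ae (hS N)) _).trans
    ((isDunfordSchwartz_brunelOp hσ (N + 1)).hopf_maximal_inequality hq hq' (by positivity))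

theorem exists_le_two_pow_le {D n : ℕ} (hD : 0 < D) (hn : 0 < n) :
    ∃ L, n ≤ 2 ^ (D * L) ∧ 2 ^ (D * L) ≤ 2 ^ D * n := by
  obtain ⟨r, -, hnr, hrn⟩ := exists_dyadic_level (D := D) (L := n) (k := n - 1) <|
    calc n - 1 < n := Nat.sub_lt hn one_pos
      _ < 2 ^ n := Nat.lt_two_pow_self
      _ ≤ 2 ^ (D * n) := Nat.pow_le_pow_right two_pos (Nat.le_mul_of_pos_left n hD)
  refine ⟨r, by omega, ?_⟩
  rcases r with - | s
  · exact Nat.mul_pos (by positivity) hn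
  · rw [mul_add, pow_add, mul_one, mul_comm]
    exact Nat.mul_le_mul_left _ ((hrn s rfl).trans (Nat.sub_le _ _))

/-- The constant of the maximal inequality for the averages over cubes of `ℕ^d`. -/
noncomputable def maximalConst (d : ℕ) : ℝ := brunelConst d / 2 / (2 ^ (d + 2)) ^ d

theorem maximalConst_pos (d : ℕ) : 0 < maximalConst d := by
  have := brunelConst_pos d
  unfold maximalConst
  positivity

theorem cubeAvg_maximal_inequality (hσ : ∀ κ, IsDunfordSchwartz (σ κ)) (hq : 0 ≤ᵐ[μ] q)
    (hq' : ∫⁻ ω, ENNReal.ofReal (q ω) ∂μ ≠ ∞) (hlam : 0 ≤ lam) :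
    ENNReal.ofReal (maximalConst d * lam) * μ {ω | ∃ n : ℕ, 0 < n ∧ lam < cubeAvg σ n q ω}
      ≤ ∫⁻ ω, ENNReal.ofReal (q ω) ∂μ := by
  have hsub : {ω | ∃ n : ℕ, 0 < n ∧ lam < cubeAvg σ n q ω}
      ≤ᵐ[μ] {ω | ∃ L : ℕ, lam / (2 ^ (d + 2)) ^ d < cubeAvg σ (2 ^ ((d + 2) * L)) q ω} := by
    have hle : ∀ᵐ ω ∂μ, ∀ m n : ℕ, 0 < n → n ≤ m →
        cubeAvg σ n q ω ≤ ((m : ℝ) / n) ^ d * cubeAvg σ m q ω := by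
      simp only [ae_all_iff, eventually_imp_distrib_left]
      intro m n hn hnm
      simpa using cubeAvg_apply_le hσ hn hnm hq
    have hpos : ∀ᵐ ω ∂μ, ∀ n, 0 ≤ cubeAvg σ n q ω :=
      ae_all_iff.2 fun n => (isDunfordSchwartz_cubeAvg hσ n).nonneg q hq
    filter_upwards [hle, hpos] with ω hle hpos ⟨n, hn, hω⟩
    obtain ⟨L, hnL, hLn⟩ := exists_le_two_pow_le (Nat.succ_pos (d + 1)) hn
    have hratio : ((2 ^ ((d + 2) * L) : ℕ) : ℝ) / n ≤ 2 ^ (d + 2) := by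
      rw [div_le_iff₀ (by exact_mod_cast hn)]
      exact_mod_cast hLn
    refine ⟨L, (div_lt_iff₀' (by positivity)).2 (hω.trans_le ((hle _ n hn hnL).trans ?_))⟩
    have := hpos (2 ^ ((d + 2) * L))
    gcongr
  calc _ ≤ ENNReal.ofReal (brunelConst d / 2 * (lam / (2 ^ (d + 2)) ^ d))
        * μ {ω | ∃ L : ℕ, lam / (2 ^ (d + 2)) ^ d < cubeAvg σ (2 ^ ((d + 2) * L)) q ω} := by
        rw [maximalConst, div_mul_eq_mul_div, ← mul_div_assoc]
        exact mul_le_mul_right (measure_mono_ae hsub) _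
    _ ≤ _ := cubeAvg_maximal_inequality_dyadic hσ hq hq' (by positivity)

end CubeAverages

/-! ### Almost uniform convergence -/

section AuCauchy

variable {ι κ : Type*} {μ : Measure Ω} {l : Filter ι} {k : Filter κ} {F G : ι → Ω →ₘ[μ] ℝ}

/-- A net is almost uniformly Cauchy if, for every `ε`, its members are eventually within `ε` of
each other off a set of measure at most `ε`. -/
def AuCauchy (μ : Measure Ω) (l : Filter ι) (F : ι → Ω →ₘ[μ] ℝ) : Prop :=
  ∀ ε : ℝ, 0 < ε → ∃ S : Set Ω, MeasurableSet S ∧ μ S ≤ ENNReal.ofReal ε ∧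
    ∀ᶠ p in l ×ˢ l, ∀ᵐ ω ∂μ, ω ∉ S → |F p.1 ω - F p.2 ω| ≤ ε

theorem measure_union_le_ofReal {S T : Set Ω} {ε : ℝ} (hε : 0 ≤ ε)
    (hS : μ S ≤ ENNReal.ofReal (ε / 2)) (hT : μ T ≤ ENNReal.ofReal (ε / 2)) :
    μ (S ∪ T) ≤ ENNReal.ofReal ε :=
  calc μ (S ∪ T) ≤ ENNReal.ofReal (ε / 2) + ENNReal.ofReal (ε / 2) :=
        (measure_union_le S T).trans (add_le_add hS hT)
    _ = ENNReal.ofReal ε := by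
        rw [← ofReal_add (by positivity) (by positivity), add_halves]

theorem auCauchy_of_sandwich
    (h : ∀ ε : ℝ, 0 < ε → ∃ G : κ → Ω →ₘ[μ] ℝ, AuCauchy μ k G ∧
      ∃ a b : ι → κ, Tendsto a l k ∧ Tendsto b l k ∧
      ∃ S, MeasurableSet S ∧ μ S ≤ ENNReal.ofReal ε ∧ ∀ᶠ i in l, ∀ᵐ ω ∂μ, ω ∉ S →
        G (a i) ω - ε ≤ F i ω ∧ F i ω ≤ G (b i) ω + ε) : AuCauchy μ l F := by
  intro ε hε
  obtain ⟨G, hG, a, b, ha, hb, S, hS, hSμ, hF⟩ := h (ε / 3) (by positivity)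
  obtain ⟨S', hS', hSμ', hG⟩ := hG (ε / 3) (by positivity)
  refine ⟨S ∪ S', hS.union hS', measure_union_le_ofReal hε.le
    (hSμ.trans (ofReal_le_ofReal (by linarith))) (hSμ'.trans (ofReal_le_ofReal (by linarith))), ?_⟩
  filter_upwards [hF.prod_mk hF, (hb.prodMap ha).eventually hG,
    ((hb.prodMap ha).comp tendsto_prod_swap).eventually hG] with ⟨i, j⟩ ⟨hi, hj⟩ hij hji
  filter_upwards [hi, hj, hij, hji] with ω hi hj hij hji hω
  rw [mem_union, not_or] at hω
  have hij := abs_le.1 (hij hω.2)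
  have hji := abs_le.1 (hji hω.2)
  obtain ⟨hi₁, hi₂⟩ := hi hω.1
  obtain ⟨hj₁, hj₂⟩ := hj hω.1
  simp only [Prod.map, Function.comp_apply, Prod.swap] at hij hji
  exact abs_le.2 ⟨by linarith, by linarith⟩

theorem auCauchy_of_approx
    (h : ∀ ε : ℝ, 0 < ε → ∃ G : ι → Ω →ₘ[μ] ℝ, AuCauchy μ l G ∧
      ∃ S, MeasurableSet S ∧ μ S ≤ ENNReal.ofReal ε ∧
        ∀ᶠ i in l, ∀ᵐ ω ∂μ, ω ∉ S → |F i ω - G i ω| ≤ ε) : AuCauchy μ l F := by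
  refine auCauchy_of_sandwich (k := l) fun ε hε => ?_
  obtain ⟨G, hG, S, hS, hSμ, hFG⟩ := h ε hε
  refine ⟨G, hG, id, id, tendsto_id, tendsto_id, S, hS, hSμ, ?_⟩
  filter_upwards [hFG] with i hi
  filter_upwards [hi] with ω hω hωS
  exact abs_sub_le_iff.1 (hω hωS) |>.symm.imp (fun h => by rw [id]; linarith) fun h => by
    rw [id]; linarith

theorem auCauchy_const (f : Ω →ₘ[μ] ℝ) : AuCauchy μ l fun _ => f := fun ε hε =>
  ⟨∅, .empty, by simp, .of_forall fun _ => .of_forall fun ω _ => by simpa using hε.le⟩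

theorem auCauchy_of_eventually_abs_sub_le {f : Ω →ₘ[μ] ℝ}
    (h : ∀ ε : ℝ, 0 < ε → ∀ᶠ i in l, ∀ᵐ ω ∂μ, |F i ω - f ω| ≤ ε) : AuCauchy μ l F :=
  auCauchy_of_approx fun ε hε => ⟨fun _ => f, auCauchy_const f, ∅, .empty,
    measure_empty.trans_le zero_le, (h ε hε).mono fun _ hi => hi.mono fun _ hω _ => hω⟩

theorem AuCauchy.congr' (hF : AuCauchy μ l F) (hFG : F =ᶠ[l] G) : AuCauchy μ l G := by
  intro ε hε
  obtain ⟨S, hS, hSμ, hF⟩ := hF ε hε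
  refine ⟨S, hS, hSμ, ?_⟩
  filter_upwards [hF, hFG.prod_mk hFG] with p hp ⟨h₁, h₂⟩
  rwa [← h₁, ← h₂]

theorem AuCauchy.add (hF : AuCauchy μ l F) (hG : AuCauchy μ l G) :
    AuCauchy μ l fun i => F i + G i := by
  intro ε hε
  obtain ⟨S, hS, hSμ, hF⟩ := hF (ε / 2) (by positivity)
  obtain ⟨S', hS', hSμ', hG⟩ := hG (ε / 2) (by positivity)
  refine ⟨S ∪ S', hS.union hS', measure_union_le_ofReal hε.le hSμ hSμ', ?_⟩
  filter_upwards [hF, hG] with p hF hG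
  filter_upwards [hF, hG, AEEqFun.coeFn_add (F p.1) (G p.1), AEEqFun.coeFn_add (F p.2) (G p.2)]
    with ω hF hG h₁ h₂ hω
  rw [mem_union, not_or] at hω
  rw [h₁, h₂, Pi.add_apply, Pi.add_apply, add_sub_add_comm]
  linarith [abs_add_le (F p.1 ω - F p.2 ω) (G p.1 ω - G p.2 ω), hF hω.1, hG hω.2]

theorem AuCauchy.const_smul (hF : AuCauchy μ l F) (c : ℝ) : AuCauchy μ l fun i => c • F i := by
  intro ε hε
  obtain ⟨S, hS, hSμ, hF⟩ := hF (ε / (|c| + 1)) (by positivity)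
  refine ⟨S, hS, hSμ.trans (ofReal_le_ofReal (div_le_self hε.le (by simp))), ?_⟩
  filter_upwards [hF] with p hF
  filter_upwards [hF, AEEqFun.coeFn_smul c (F p.1), AEEqFun.coeFn_smul c (F p.2)]
    with ω hF h₁ h₂ hω
  rw [h₁, h₂, Pi.smul_apply, Pi.smul_apply, ← smul_sub, smul_eq_mul, abs_mul]
  calc |c| * |F p.1 ω - F p.2 ω| ≤ (|c| + 1) * (ε / (|c| + 1)) := by
        gcongr
        · linarith
        · exact hF hω
    _ = ε := mul_div_cancel₀ _ (by positivity)

end AuCauchy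

section Completeness

variable {ι : Type*} {μ : Measure Ω} {l : Filter ι} {F : ι → Ω →ₘ[μ] ℝ} {f : Ω →ₘ[μ] ℝ}

theorem auTendsto_of_eventually_abs_sub_le
    (h : ∀ ε : ℝ, 0 < ε → ∃ S, MeasurableSet S ∧ μ S ≤ ENNReal.ofReal ε ∧
      ∀ δ : ℝ, 0 < δ → ∀ᶠ i in l, ∀ᵐ ω ∂μ, ω ∉ S → |F i ω - f ω| ≤ δ) : AuTendsto μ l F f := by
  intro ε hε
  obtain ⟨S, hS, hSμ, hF⟩ := h ε hε
  refine ⟨Sᶜ, hS.compl, by rwa [compl_compl], ENNReal.tendsto_nhds_zero.2 fun δ hδ => ?_⟩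
  obtain ⟨r, hr, hrδ⟩ := ENNReal.lt_iff_exists_nnreal_btwn.1 hδ
  filter_upwards [hF r (by exact_mod_cast hr)] with i hi
  rw [eLpNorm_exponent_top]
  refine (eLpNormEssSup_le_of_ae_bound (C := r) ?_).trans (by simpa using hrδ.le)
  filter_upwards [hi, AEEqFun.coeFn_sub (F i) f] with ω hω hsub
  by_cases hωS : ω ∈ S
  · rw [indicator_of_notMem (by simpa using hωS), norm_zero]
    exact r.2
  · rw [indicator_of_mem (by simpa using hωS), hsub]
    exact hω hωS

theorem ae_eventually_of_eventually_ae {p : ℕ → Ω → Prop}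
    (h : ∀ᶠ n in atTop, ∀ᵐ ω ∂μ, p n ω) : ∀ᵐ ω ∂μ, ∀ᶠ n in atTop, p n ω := by
  obtain ⟨N, hN⟩ := eventually_atTop.1 h
  have hN : ∀ᵐ ω ∂μ, ∀ n, N ≤ n → p n ω :=
    ae_all_iff.2 fun n => eventually_imp_distrib_left.2 (hN n)
  exact hN.mono fun ω hω => eventually_atTop.2 ⟨N, hω⟩

theorem AuCauchy.exists_summable_sets (hF : AuCauchy μ l F) :
    ∃ S : ℕ → Set Ω, (∀ n, MeasurableSet (S n)) ∧ ∑' n, μ (S n) ≠ ∞ ∧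
      ∀ n, ∀ᶠ p in l ×ˢ l, ∀ᵐ ω ∂μ, ω ∉ S n → |F p.1 ω - F p.2 ω| ≤ (1 / 2) ^ n := by
  choose S hS hSμ hF using fun n : ℕ => hF ((1 / 2) ^ n) (by positivity)
  refine ⟨S, hS, ne_top_of_le_ne_top ?_ (ENNReal.tsum_le_tsum hSμ), hF⟩
  rw [← ENNReal.ofReal_tsum_of_nonneg (fun n => by positivity) summable_geometric_two]
  exact ofReal_ne_top

theorem AuCauchy.exists_ae_tendsto (hF : AuCauchy μ l F) {u : ℕ → ι} (hu : Tendsto u atTop l) :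
    ∃ f : Ω →ₘ[μ] ℝ, ∀ᵐ ω ∂μ, Tendsto (fun n => F (u n) ω) atTop (𝓝 (f ω)) := by
  obtain ⟨S, -, hSμ, hF⟩ := hF.exists_summable_sets
  have hclose : ∀ᵐ ω ∂μ, ∀ k, ∃ N, ∀ m, N ≤ m → ω ∉ S k →
      |F (u m) ω - F (u N) ω| ≤ (1 / 2) ^ k := by
    refine ae_all_iff.2 fun k => ?_
    obtain ⟨N, hN⟩ := eventually_atTop_prod_self'.1
      (prod_atTop_atTop_eq (α := ℕ) (β := ℕ) ▸ (hu.prodMap hu).eventually (hF k))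
    have hN : ∀ᵐ ω ∂μ, ∀ m, N ≤ m → ω ∉ S k → |F (u m) ω - F (u N) ω| ≤ (1 / 2) ^ k :=
      ae_all_iff.2 fun m => eventually_imp_distrib_left.2 fun hm => hN m hm N le_rfl
    exact hN.mono fun ω hω => ⟨N, hω⟩
  have hlim : ∀ᵐ ω ∂μ, ∃ x, Tendsto (fun n => F (u n) ω) atTop (𝓝 x) := by
    filter_upwards [ae_eventually_notMem hSμ, hclose] with ω hω hclose
    refine cauchySeq_tendsto_of_complete (Metric.cauchySeq_iff'.2 fun ε hε => ?_)
    obtain ⟨k, hωk, hk⟩ := (hω.and ((tendsto_pow_atTop_nhds_zero_of_lt_one (r := (1 / 2 : ℝ))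
      (by norm_num) (by norm_num)).eventually (gt_mem_nhds hε))).exists
    obtain ⟨N, hN⟩ := hclose k
    exact ⟨N, fun m hm => (hN m hm hωk).trans_lt hk⟩
  obtain ⟨φ, hφ, hlim⟩ := measurable_limit_of_tendsto_metrizable_ae
    (fun n => (F (u n)).measurable.aemeasurable) hlim
  refine ⟨AEEqFun.mk φ hφ.aestronglyMeasurable, ?_⟩
  filter_upwards [hlim, AEEqFun.coeFn_mk φ hφ.aestronglyMeasurable] with ω hω hmk
  rwa [hmk]

theorem AuCauchy.auTendsto (hF : AuCauchy μ l F) {u : ℕ → ι} (hu : Tendsto u atTop l)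
    (hf : ∀ᵐ ω ∂μ, Tendsto (fun n => F (u n) ω) atTop (𝓝 (f ω))) : AuTendsto μ l F f := by
  obtain ⟨S, hS, hSμ, hF⟩ := hF.exists_summable_sets
  refine auTendsto_of_eventually_abs_sub_le fun ε hε => ?_
  obtain ⟨m, hm⟩ := ((ENNReal.tendsto_sum_nat_add _ hSμ).eventually
    (ge_mem_nhds (ofReal_pos.2 hε))).exists
  refine ⟨⋃ k, S (k + m), .iUnion fun k => hS _, (measure_iUnion_le _).trans hm, fun δ hδ => ?_⟩
  obtain ⟨k, hk⟩ := exists_pow_lt_of_lt_one hδ (show (1 / 2 : ℝ) < 1 by norm_num)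
  have hpair : ∀ᶠ i in l, ∀ᶠ n in atTop, ∀ᵐ ω ∂μ, ω ∉ S (k + m) →
      |F i ω - F (u n) ω| ≤ (1 / 2) ^ (k + m) :=
    ((tendsto_id.prodMap hu).eventually (hF (k + m))).curry
  filter_upwards [hpair] with i hi
  filter_upwards [ae_eventually_of_eventually_ae hi, hf] with ω hω hf hωS
  have hωk : ω ∉ S (k + m) := fun h => hωS (mem_iUnion.2 ⟨k, h⟩)
  refine (le_of_tendsto (tendsto_const_nhds.sub hf).abs (hω.mono fun n hn => hn hωk)).trans ?_
  exact (pow_le_pow_of_le_one (by norm_num) (by norm_num) (Nat.le_add_right k m)).trans hk.le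

end Completeness

section BanachPrinciple

variable {ι E : Type*} {μ : Measure Ω} {l : Filter ι} [SeminormedAddCommGroup E] [NormedSpace ℝ E]

/-- The maximal operator `x ↦ sup_i |V i x|` is continuous in measure at `0`. -/
def ContinuousMaximal (l : Filter ι) (V : ι → E →ₗ[ℝ] L1pLinf μ) : Prop :=
  ∀ ε : ℝ, 0 < ε → ∃ δ : ℝ, 0 < δ ∧ ∀ x, ‖x‖ < δ → ∃ S, MeasurableSet S ∧
    μ S ≤ ENNReal.ofReal ε ∧ ∀ᶠ i in l, ∀ᵐ ω ∂μ, ω ∉ S → |V i x ω| ≤ ε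

/-- The vectors `x` for which the net `V i x` is almost uniformly Cauchy. -/
def auCauchySubmodule (l : Filter ι) (V : ι → E →ₗ[ℝ] L1pLinf μ) : Submodule ℝ E where
  carrier := {x | AuCauchy μ l fun i => (V i x : Ω →ₘ[μ] ℝ)}
  add_mem' {x y} hx hy := by
    have h : (fun i => (V i (x + y) : Ω →ₘ[μ] ℝ)) = fun i => (V i x : Ω →ₘ[μ] ℝ) + V i y :=
      funext fun i => congrArg Subtype.val ((V i).map_add x y)
    rw [mem_ofPred_eq, h]
    exact AuCauchy.add hx hy
  zero_mem' := by
    have h : (fun i => (V i 0 : Ω →ₘ[μ] ℝ)) = fun _ => 0 :=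
      funext fun i => congrArg Subtype.val (V i).map_zero
    rw [mem_ofPred_eq, h]
    exact auCauchy_const 0
  smul_mem' c x hx := by
    have h : (fun i => (V i (c • x) : Ω →ₘ[μ] ℝ)) = fun i => c • (V i x : Ω →ₘ[μ] ℝ) :=
      funext fun i => by rw [map_smul, Submodule.coe_smul]
    rw [mem_ofPred_eq, h]
    exact AuCauchy.const_smul (F := fun i => (V i x : Ω →ₘ[μ] ℝ)) hx c

theorem mem_auCauchySubmodule {V : ι → E →ₗ[ℝ] L1pLinf μ} {x : E} :
    x ∈ auCauchySubmodule l V ↔ AuCauchy μ l fun i => (V i x : Ω →ₘ[μ] ℝ) := Iff.rfl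

theorem ContinuousMaximal.isClosed_auCauchySubmodule {V : ι → E →ₗ[ℝ] L1pLinf μ}
    (hV : ContinuousMaximal l V) : IsClosed (auCauchySubmodule l V : Set E) := by
  refine isClosed_of_closure_subset fun x hx =>
    mem_auCauchySubmodule.2 <| auCauchy_of_approx fun ε hε => ?_
  obtain ⟨δ, hδ, hV⟩ := hV ε hε
  obtain ⟨y, hy, hxy⟩ := Metric.mem_closure_iff.1 hx δ hδ
  obtain ⟨S, hS, hSμ, hV⟩ := hV (x - y) (by rwa [← dist_eq_norm])
  refine ⟨fun i => V i y, mem_auCauchySubmodule.1 hy, S, hS, hSμ, ?_⟩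
  filter_upwards [hV] with i hi
  filter_upwards [hi, L1pLinf.coeFn_sub (V i x) (V i y)] with ω hω hsub hωS
  rw [map_sub, hsub] at hω
  exact hω hωS

theorem continuousMaximal_of_weak_type {V : ι → E →ₗ[ℝ] L1pLinf μ} {C : ℝ} (hC : 0 < C) {k : ℕ}
    (hk : k ≠ 0)
    (h : ∀ x, ∀ lam : ℝ, 0 < lam → ∃ S, MeasurableSet S ∧
      ENNReal.ofReal (C * lam ^ k) * μ S ≤ ENNReal.ofReal (‖x‖ ^ k) ∧
      ∀ᶠ i in l, ∀ᵐ ω ∂μ, ω ∉ S → |V i x ω| ≤ lam) : ContinuousMaximal l V := by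
  intro ε hε
  have hCε : 0 < C * ε ^ k := by positivity
  refine ⟨min 1 (C * ε ^ k * ε), by positivity, fun x hx => ?_⟩
  obtain ⟨S, hS, hSμ, hV⟩ := h x ε hε
  refine ⟨S, hS, ?_, hV⟩
  rw [← ENNReal.mul_le_mul_iff_right (ofReal_pos.2 hCε).ne' ofReal_ne_top, ← ofReal_mul hCε.le]
  refine hSμ.trans (ofReal_le_ofReal ?_)
  calc ‖x‖ ^ k ≤ ‖x‖ := pow_le_of_le_one (norm_nonneg x) (hx.le.trans (min_le_left _ _)) hk
    _ ≤ C * ε ^ k * ε := hx.le.trans (min_le_right _ _)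

end BanachPrinciple

/-! ### Almost uniform convergence of the discrete averages of square-integrable functions -/

section CubeAverages

open Polynomial L1pLinf

theorem opProd_eq_update_mul {ι A : Type*} [Fintype ι] [DecidableEq ι] [Semiring A] [Algebra ℝ A]
    (τ : Multiplicative (ι → ℕ) →* A) (p : ι → ℝ[X]) (i : ι) :
    opProd τ p = opProd τ (Function.update p i 1)
      * aeval (τ (Multiplicative.ofAdd (Pi.single i 1))) (p i) := by
  have hsplit : p = Function.update p i 1 * Pi.mulSingle i (p i) := by
    ext1 j
    rcases eq_or_ne j i with rfl | hj
    · simp only [Pi.mul_apply, Function.update_self, Pi.mulSingle_eq_same, one_mul]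
    · simp only [Pi.mul_apply, Function.update_of_ne hj, Pi.mulSingle_eq_of_ne hj, mul_one]
  have hsingle : opProd τ (Pi.mulSingle i (p i))
      = aeval (τ (Multiplicative.ofAdd (Pi.single i 1))) (p i) := by
    rw [opProd, Finset.prod_eq_single i, Pi.mulSingle_eq_same, ← aeval_algHom_apply,
      AddMonoidAlgebra.lift_of]
    · intro j _ hj
      rw [Pi.mulSingle_eq_of_ne hj, map_one]
    · exact fun hi => absurd (Finset.mem_univ i) hi
  conv_lhs => rw [hsplit, opProd_mul, hsingle]

variable {μ : Measure Ω}

theorem cubeAvg_mul_one_sub {ι : Type*} [Fintype ι] [DecidableEq ι]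
    (τ : Multiplicative (ι → ℕ) →* Module.End ℝ (L1pLinf μ)) (n : ℕ) (i : ι) :
    cubeAvg τ n * (1 - τ (Multiplicative.ofAdd (Pi.single i 1)))
      = opProd τ (Function.update (fun _ => C (1 / (n : ℝ)) * geomPoly n) i 1)
        * (1 / (n : ℝ)) • (1 - τ (Multiplicative.ofAdd (Pi.single i 1)) ^ n) := by
  have hgeom : C (1 / (n : ℝ)) * geomPoly n * (1 - X) = (1 / (n : ℝ)) • (1 - X ^ n) := by
    rw [mul_assoc, geomPoly, geom_sum_mul_neg, smul_eq_C_mul]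
  have haeval := congrArg (aeval (τ (Multiplicative.ofAdd (Pi.single i 1)))) hgeom
  rw [map_mul, map_sub, map_one, aeval_X, map_smul, map_sub, map_one, map_pow, aeval_X] at haeval
  rw [cubeAvg, opProd_eq_update_mul τ _ i, mul_assoc, haeval]

variable {d : ℕ} {σ : Multiplicative (Fin d → ℕ) →* Module.End ℝ (L1pLinf μ)}

theorem abs_cubeAvg_sub_apply_le (hσ : ∀ κ, IsDunfordSchwartz (σ κ)) (i : Fin d) {g : L1pLinf μ}
    {c : ℝ} (hg : ∀ᵐ ω ∂μ, |g ω| ≤ c) (n : ℕ) :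
    ∀ᵐ ω ∂μ, |cubeAvg σ n (g - σ (Multiplicative.ofAdd (Pi.single i 1)) g) ω| ≤ 2 * c / n := by
  let U := σ (Multiplicative.ofAdd (Pi.single i 1))
  have hcob : cubeAvg σ n (g - U g)
      = opProd σ (Function.update (fun _ => C (1 / (n : ℝ)) * geomPoly n) i 1)
        ((1 / (n : ℝ)) • (g - (U ^ n) g)) :=
    LinearMap.congr_fun (cubeAvg_mul_one_sub σ n i) g
  have hmem : ∀ j, Function.update (fun _ => C (1 / (n : ℝ)) * geomPoly n) i 1 j ∈ nonnegCoeff ℝ :=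
    (Function.forall_update_iff _ fun _ p => p ∈ nonnegCoeff ℝ).2 ⟨one_mem _, fun _ _ =>
      C_mul_geomPoly_mem_nonnegCoeff n⟩
  have heval : ∀ j, (Function.update (fun _ => C (1 / (n : ℝ)) * geomPoly n) i 1 j).eval 1 ≤ 1 :=
    (Function.forall_update_iff _ fun _ p => eval 1 p ≤ 1).2 ⟨eval_one.le, fun _ _ =>
      eval_one_C_mul_geomPoly_le n⟩
  rw [hcob]
  refine (isDunfordSchwartz_opProd hσ hmem heval).abs_le_const ?_
  filter_upwards [hg, ((hσ _).pow n).abs_le_const hg, coeFn_smul (1 / (n : ℝ)) (g - (U ^ n) g),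
    coeFn_sub g ((U ^ n) g)] with ω hg hUg hsmul hsub
  rw [hsmul, Pi.smul_apply, hsub, Pi.sub_apply, smul_eq_mul, abs_mul, abs_of_nonneg (by positivity),
    one_div_mul_eq_div]
  gcongr
  linarith [abs_sub (g ω) ((U ^ n) g ω)]

theorem cubeAvg_apply_eq_self {v : L1pLinf μ}
    (hv : ∀ i, σ (Multiplicative.ofAdd (Pi.single i 1)) v = v) {n : ℕ} (hn : 0 < n) :
    cubeAvg σ n v = v := by
  let M : AddSubmonoid (Fin d → ℕ) :=
    { carrier := {κ | σ (Multiplicative.ofAdd κ) v = v}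
      zero_mem' := by rw [mem_ofPred_eq, ofAdd_zero, map_one, Module.End.one_apply]
      add_mem' {κ κ'} hκ hκ' := by
        rw [mem_ofPred_eq] at hκ hκ' ⊢
        rw [ofAdd_add, map_mul, Module.End.mul_apply, hκ', hκ] }
  have hfix : ∀ κ, σ (Multiplicative.ofAdd κ) v = v := fun κ => by
    change κ ∈ M
    rw [← Finset.univ_sum_single κ]
    refine sum_mem fun i _ => ?_
    have hsmul : (Pi.single i (κ i) : Fin d → ℕ) = κ i • Pi.single i 1 := by
      rw [← Pi.single_smul, smul_eq_mul, mul_one]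
    exact hsmul ▸ M.nsmul_mem (hv i) _
  have hn' : (n : ℝ) ≠ 0 := Nat.cast_ne_zero.2 hn.ne'
  rw [cubeAvg_eq_sum σ hn, LinearMap.smul_apply, LinearMap.sum_apply,
    Finset.sum_congr rfl fun κ _ => hfix κ, Finset.sum_const, Fintype.card_piFinset_const,
    Finset.card_range, Fintype.card_fin, ← Nat.cast_smul_eq_nsmul ℝ, smul_smul, Nat.cast_pow,
    ← mul_pow, one_div_mul_cancel hn', one_pow, one_smul]

theorem continuousMaximal_cubeAvg_two (hσ : ∀ κ, IsDunfordSchwartz (σ κ)) :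
    ContinuousMaximal atTop fun n => cubeAvg σ n ∘ₗ (ofLp : Lp ℝ 2 μ →ₗ[ℝ] L1pLinf μ) := by
  refine continuousMaximal_of_weak_type (maximalConst_pos d) two_ne_zero fun x lam hlam => ?_
  obtain ⟨g, hg⟩ := exists_coeFn_eq_sq (f := ofLp x) (Lp.memLp x)
  have hnorm : ∫⁻ ω, ENNReal.ofReal (g ω) ∂μ = ENNReal.ofReal (‖x‖ ^ 2) := by
    rw [ofReal_pow (norm_nonneg x), Lp.norm_def, ofReal_toReal (Lp.eLpNorm_ne_top x),
      sq_eLpNorm_two]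
    exact lintegral_congr_ae (hg.mono fun ω hω => congrArg ENNReal.ofReal hω)
  have hmax := cubeAvg_maximal_inequality hσ (hg.mono fun ω hω => hω ▸ sq_nonneg (ofLp x ω))
    (hnorm ▸ ofReal_ne_top) (sq_nonneg lam)
  refine ⟨toMeasurable μ _, measurableSet_toMeasurable _ _, by
    rw [measure_toMeasurable, ← hnorm]; exact hmax, ?_⟩
  filter_upwards [eventually_gt_atTop 0] with n hn
  filter_upwards [(isDunfordSchwartz_cubeAvg hσ n).sq_le hg.symm.le] with ω hω hωS
  have hle : cubeAvg σ n g ω ≤ lam ^ 2 := not_lt.1 fun hlt =>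
    hωS (subset_toMeasurable _ _ ⟨n, hn, hlt⟩)
  exact abs_le_of_sq_le_sq (hω.trans hle) hlam.le

theorem eq_of_inner_sub_eq_zero {H : Type*} [NormedAddCommGroup H] [InnerProductSpace ℝ H]
    {x y : H} (hxy : ‖y‖ ≤ ‖x‖) (h : inner ℝ (x - y) x = 0) : y = x := by
  rw [inner_sub_left, real_inner_self_eq_norm_sq] at h
  have hsq : ‖y‖ ^ 2 ≤ ‖x‖ ^ 2 := by gcongr
  have hsub := norm_sub_sq_real y x
  have hzero : ‖y - x‖ ^ 2 = 0 := le_antisymm (by linarith) (sq_nonneg _)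
  exact sub_eq_zero.1 (norm_eq_zero.1 (pow_eq_zero_iff two_ne_zero |>.1 hzero))

theorem sub_lpRestrict_mem_auCauchySubmodule (hσ : ∀ κ, IsDunfordSchwartz (σ κ)) (i : Fin d)
    (x : Lp ℝ 2 μ) :
    x - lpRestrict _ (hσ (Multiplicative.ofAdd (Pi.single i 1))).eLpNorm_two_le x
      ∈ auCauchySubmodule atTop fun n => cubeAvg σ n ∘ₗ (ofLp : Lp ℝ 2 μ →ₗ[ℝ] L1pLinf μ) := by
  let U := lpRestrict _ (hσ (Multiplicative.ofAdd (Pi.single i 1))).eLpNorm_two_le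
  let W := auCauchySubmodule atTop fun n => cubeAvg σ n ∘ₗ (ofLp : Lp ℝ 2 μ →ₗ[ℝ] L1pLinf μ)
  have hclosed : IsClosed {x | x - U x ∈ W} :=
    (continuousMaximal_cubeAvg_two hσ).isClosed_auCauchySubmodule.preimage
      (continuous_id.sub U.continuous)
  refine (Lp.simpleFunc.denseRange (p := 2) ofNat_ne_top).induction_on (p := fun x => x - U x ∈ W) x
    hclosed fun s => ?_
  obtain ⟨c, hc⟩ := (Lp.simpleFunc.toSimpleFunc s).exists_forall_norm_le
  have hs : ∀ᵐ ω ∂μ, |ofLp (s : Lp ℝ 2 μ) ω| ≤ c := by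
    filter_upwards [Lp.simpleFunc.toSimpleFunc_eq_toFun s] with ω hω
    rw [coeFn_ofLp, ← hω]
    exact hc ω
  rw [mem_auCauchySubmodule]
  refine auCauchy_of_eventually_abs_sub_le (f := 0) fun ε hε => ?_
  have hlim : Tendsto (fun n : ℕ => 2 * c / n) atTop (𝓝 0) :=
    tendsto_const_div_atTop_nhds_zero_nat _
  filter_upwards [hlim.eventually (ge_mem_nhds hε)] with n hn
  filter_upwards [abs_cubeAvg_sub_apply_le hσ i hs n, AEEqFun.coeFn_zero (β := ℝ) (μ := μ)]
    with ω hω hzero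
  rw [hzero, Pi.zero_apply, sub_zero]
  exact hω.trans hn

theorem auCauchySubmodule_cubeAvg_eq_top (hσ : ∀ κ, IsDunfordSchwartz (σ κ)) :
    (auCauchySubmodule atTop fun n => cubeAvg σ n ∘ₗ (ofLp : Lp ℝ 2 μ →ₗ[ℝ] L1pLinf μ)) = ⊤ := by
  let W := auCauchySubmodule atTop fun n => cubeAvg σ n ∘ₗ (ofLp : Lp ℝ 2 μ →ₗ[ℝ] L1pLinf μ)
  have : CompleteSpace W :=
    (continuousMaximal_cubeAvg_two hσ).isClosed_auCauchySubmodule.completeSpace_coe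
  rw [← Submodule.orthogonal_eq_bot_iff, eq_bot_iff]
  intro x hx
  have hfix : ∀ i, lpRestrict _ (hσ (Multiplicative.ofAdd (Pi.single i 1))).eLpNorm_two_le x = x :=
    fun i => eq_of_inner_sub_eq_zero
      ((lpRestrict _ _).le_of_opNorm_le (norm_lpRestrict_le _) x |>.trans_eq (one_mul _))
      ((Submodule.mem_orthogonal _ _).1 hx _ (sub_lpRestrict_mem_auCauchySubmodule hσ i x))
  have hxW : x ∈ W := by
    rw [mem_auCauchySubmodule]
    refine auCauchy_of_eventually_abs_sub_le (f := x) fun ε hε => ?_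
    filter_upwards [eventually_gt_atTop 0] with n hn
    rw [LinearMap.comp_apply, cubeAvg_apply_eq_self (fun i => congrArg ofLp (hfix i)) hn]
    exact .of_forall fun ω => (sub_self (ofLp x ω)).symm ▸ abs_zero.trans_le hε.le
  exact inner_self_eq_zero.1 ((Submodule.mem_orthogonal _ _).1 hx x hxW)

theorem auCauchy_cubeAvg (hσ : ∀ κ, IsDunfordSchwartz (σ κ)) {q : L1pLinf μ} (hq : MemLp q 2 μ) :
    AuCauchy μ atTop fun n => (cubeAvg σ n q : Ω →ₘ[μ] ℝ) := by
  obtain ⟨x, rfl⟩ : ∃ x : Lp ℝ 2 μ, ofLp x = q := ⟨⟨q, hq.2⟩, rfl⟩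
  have hx : x ∈ auCauchySubmodule atTop fun n => cubeAvg σ n ∘ₗ ofLp := by
    rw [auCauchySubmodule_cubeAvg_eq_top hσ]
    exact Submodule.mem_top
  rw [mem_auCauchySubmodule] at hx
  exact hx

end CubeAverages

/-! ### Averages of multiparameter flows -/

section Cubes

variable {ι : Type*}

/-- The cube `(0, t]^ι`. -/
def cube (ι : Type*) (t : ℝ) : Set (ι → ℝ) := univ.pi fun _ => Ioc 0 t

/-- The translate `κ + (0, 1]^ι` of the unit cube. -/
def unitCube (κ : ι → ℕ) : Set (ι → ℝ) := univ.pi fun i => Ioc (κ i : ℝ) (κ i + 1)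

theorem mem_unitCube {κ : ι → ℕ} {u : ι → ℝ} : u ∈ unitCube κ ↔ ∀ i, ⌈u i⌉₊ = κ i + 1 := by
  simp only [unitCube, mem_univ_pi, Nat.ceil_eq_iff (Nat.succ_ne_zero _), mem_Ioc,
    Nat.succ_sub_one, Nat.cast_succ]

theorem unitCube_zero : unitCube (0 : ι → ℕ) = cube ι 1 := by
  simp only [unitCube, cube, Pi.zero_apply, Nat.cast_zero, zero_add]

theorem preimage_add_unitCube (κ : ι → ℕ) :
    ((fun i => (κ i : ℝ)) + ·) ⁻¹' unitCube κ = unitCube 0 := by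
  ext u
  simp [unitCube]

theorem pairwise_disjoint_unitCube : Pairwise (Function.onFun Disjoint (unitCube (ι := ι))) :=
  fun _ _ hne => disjoint_left.2 fun _ hu hu' => hne <| funext fun i =>
    Nat.succ_injective ((mem_unitCube.1 hu i).symm.trans (mem_unitCube.1 hu' i))

theorem measurableSet_unitCube [Countable ι] (κ : ι → ℕ) : MeasurableSet (unitCube κ) :=
  .univ_pi fun _ => measurableSet_Ioc

variable [Fintype ι]

theorem cube_natCast [DecidableEq ι] (n : ℕ) :
    cube ι n = ⋃ κ ∈ Fintype.piFinset fun _ : ι => Finset.range n, unitCube κ := by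
  ext u
  have hu : u ∈ cube ι n ↔ ∀ i, 0 < ⌈u i⌉₊ ∧ ⌈u i⌉₊ ≤ n := by
    simp only [cube, mem_univ_pi, mem_Ioc, Nat.ceil_pos, Nat.ceil_le]
  simp only [hu, mem_iUnion, mem_unitCube, Fintype.mem_piFinset, Finset.mem_range, exists_prop]
  constructor
  · exact fun h => ⟨fun i => ⌈u i⌉₊ - 1, fun i => Nat.sub_one_lt_of_le (h i).1 (h i).2,
      fun i => (Nat.sub_add_cancel (h i).1).symm⟩
  · rintro ⟨κ, hκ, hu⟩ i
    rw [hu i]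
    exact ⟨Nat.succ_pos _, hκ i⟩

end Cubes

/-- A semigroup of positive Dunford–Schwartz operators with parameters in `[0, ∞)^d` which is
`L¹`-continuous in the interior. Only the operators `T u` with `0 ≤ u` are constrained. -/
structure IsDSFlow (μ : Measure Ω) {d : ℕ}
    (T : (Fin d → ℝ) → (Ω →ₘ[μ] ℝ) → (Ω →ₘ[μ] ℝ)) : Prop where
  isPosDS : ∀ u, 0 ≤ u → IsPosDS μ (T u)
  map_add : ∀ u v, 0 ≤ u → 0 ≤ v → ∀ f, MemL1pLinf μ f → T (u + v) f = T u (T v f)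
  tendsto_eLpNorm_sub : ∀ f : Ω →ₘ[μ] ℝ, eLpNorm f 1 μ ≠ ∞ → ∀ v : Fin d → ℝ, (∀ i, 0 < v i) →
    Tendsto (fun u => eLpNorm (⇑(T u f - T v f)) 1 μ) (𝓝[{u : Fin d → ℝ | 0 ≤ u}] v) (𝓝 0)

/-- The operator `A t` is the positive Dunford–Schwartz operator that is given on `L¹` by the
average of the flow `T` over the cube `(0, t]^d`. -/
structure IsFlowAverage (μ : Measure Ω) {d : ℕ} (T : (Fin d → ℝ) → (Ω →ₘ[μ] ℝ) → (Ω →ₘ[μ] ℝ))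
    (A : ℝ → (Ω →ₘ[μ] ℝ) → (Ω →ₘ[μ] ℝ)) : Prop where
  isPosDS : ∀ t, 0 < t → IsPosDS μ (A t)
  eq_setIntegral : ∀ t : ℝ, 0 < t → ∀ g : Lp ℝ 1 μ, ∀ F : (Fin d → ℝ) → Lp ℝ 1 μ,
    (∀ u, 0 ≤ u → (F u : Ω →ₘ[μ] ℝ) = T u g) →
      A t (g : Ω →ₘ[μ] ℝ)
        = (t ^ d)⁻¹ • ((∫ u in univ.pi fun _ : Fin d => Ioc (0 : ℝ) t, F u : Lp ℝ 1 μ) : Ω →ₘ[μ] ℝ)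

section FlowOnLpOne

open L1pLinf

/-- The flow `T`, restricted to `L¹`. -/
noncomputable def flowLpOne (μ : Measure Ω) {d : ℕ}
    (T : (Fin d → ℝ) → (Ω →ₘ[μ] ℝ) → (Ω →ₘ[μ] ℝ)) (u : Fin d → ℝ) : Lp ℝ 1 μ →L[ℝ] Lp ℝ 1 μ :=
  lpRestrict (dsEnd μ (T u)) (isDunfordSchwartz_dsEnd μ (T u)).eLpNorm_one_le

variable {μ : Measure Ω} {d : ℕ} {T : (Fin d → ℝ) → (Ω →ₘ[μ] ℝ) → (Ω →ₘ[μ] ℝ)}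

theorem norm_flowLpOne_apply_le (u : Fin d → ℝ) (g : Lp ℝ 1 μ) : ‖flowLpOne μ T u g‖ ≤ ‖g‖ :=
  (ContinuousLinearMap.le_of_opNorm_le _ (norm_lpRestrict_le _) g).trans_eq (one_mul _)

theorem flowLpOne_nonneg {g : Lp ℝ 1 μ} (hg : 0 ≤ g) (u : Fin d → ℝ) : 0 ≤ flowLpOne μ T u g := by
  rw [← Lp.coeFn_nonneg] at hg ⊢
  exact (isDunfordSchwartz_dsEnd μ (T u)).nonneg (ofLp g) hg

namespace IsDSFlow

variable (hT : IsDSFlow μ T)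
include hT

theorem coe_flowLpOne {u : Fin d → ℝ} (hu : 0 ≤ u) (g : Lp ℝ 1 μ) :
    (flowLpOne μ T u g : Ω →ₘ[μ] ℝ) = T u g :=
  (hT.isPosDS u hu).coe_dsEnd (ofLp g)

theorem flowLpOne_add {u v : Fin d → ℝ} (hu : 0 ≤ u) (hv : 0 ≤ v) (g : Lp ℝ 1 μ) :
    flowLpOne μ T (u + v) g = flowLpOne μ T u (flowLpOne μ T v g) := by
  refine Subtype.ext ?_
  rw [hT.coe_flowLpOne (add_nonneg hu hv), hT.coe_flowLpOne hu, hT.coe_flowLpOne hv]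
  exact hT.map_add u v hu hv _ (ofLp g).2

theorem continuousOn_flowLpOne (g : Lp ℝ 1 μ) :
    ContinuousOn (fun u => flowLpOne μ T u g) {u | ∀ i, 0 < u i} := by
  intro v hv
  rw [ContinuousWithinAt, tendsto_iff_norm_sub_tendsto_zero]
  have hlim := (ENNReal.tendsto_toReal zero_ne_top).comp <|
    (hT.tendsto_eLpNorm_sub g (Lp.eLpNorm_ne_top g) v hv).mono_left
      (nhdsWithin_mono v fun u (hu : ∀ i, 0 < u i) i => (hu i).le)
  refine hlim.congr' ?_
  filter_upwards [self_mem_nhdsWithin] with u hu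
  rw [Lp.norm_def, Function.comp_apply, AddSubgroup.coe_sub,
    hT.coe_flowLpOne fun i => (hu i).le, hT.coe_flowLpOne fun i => (hv i).le]

theorem integrableOn_flowLpOne (g : Lp ℝ 1 μ) (t : ℝ) :
    IntegrableOn (fun u => flowLpOne μ T u g) (cube (Fin d) t) := by
  have hfin : volume (cube (Fin d) t) < ∞ := by
    rw [cube, Real.volume_pi_Ioc]
    exact prod_lt_top fun i _ => ofReal_lt_top
  have : IsFiniteMeasure (volume.restrict (cube (Fin d) t)) :=
    ⟨by rwa [Measure.restrict_apply_univ]⟩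
  refine Integrable.of_bound (C := ‖g‖) ?_ (.of_forall fun u => norm_flowLpOne_apply_le u g)
  have hcont : ContinuousOn (fun u => flowLpOne μ T u g) (cube (Fin d) t) :=
    (hT.continuousOn_flowLpOne g).mono fun u hu i => (hu i (mem_univ i)).1
  exact hcont.aestronglyMeasurable (.univ_pi fun _ => measurableSet_Ioc)

theorem setIntegral_unitCube_flowLpOne (g : Lp ℝ 1 μ) (κ : Fin d → ℕ) :
    ∫ u in unitCube κ, flowLpOne μ T u g
      = flowLpOne μ T (fun i => (κ i : ℝ)) (∫ u in cube (Fin d) 1, flowLpOne μ T u g) := by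
  rw [← ContinuousLinearMap.integral_comp_comm _ (hT.integrableOn_flowLpOne g 1), ← unitCube_zero,
    ← (measurePreserving_add_left volume fun i => (κ i : ℝ)).setIntegral_preimage_emb
      (MeasurableEquiv.addLeft _).measurableEmbedding, preimage_add_unitCube]
  refine setIntegral_congr_fun (measurableSet_unitCube 0) fun u hu => ?_
  refine hT.flowLpOne_add (fun i => Nat.cast_nonneg _) (fun i => ?_) g
  exact (Nat.cast_nonneg _).trans (hu i (mem_univ i)).1.le

theorem setIntegral_cube_natCast_flowLpOne (g : Lp ℝ 1 μ) (n : ℕ) :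
    ∫ u in cube (Fin d) n, flowLpOne μ T u g
      = ∑ κ ∈ Fintype.piFinset fun _ : Fin d => Finset.range n,
        flowLpOne μ T (fun i => (κ i : ℝ)) (∫ u in cube (Fin d) 1, flowLpOne μ T u g) := by
  rw [cube_natCast, integral_biUnion_finset _ (fun κ _ => measurableSet_unitCube κ)
    (pairwise_disjoint_unitCube.set_pairwise _)]
  · exact Finset.sum_congr rfl fun κ _ => hT.setIntegral_unitCube_flowLpOne g κ
  · intro κ hκ
    refine (hT.integrableOn_flowLpOne g n).mono_set ?_
    rw [cube_natCast]
    exact subset_biUnion_of_mem hκ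

end IsDSFlow

end FlowOnLpOne

theorem tendsto_div_nat_floor_atTop : Tendsto (fun t : ℝ => t / ⌊t⌋₊) atTop (𝓝 1) := by
  simpa only [inv_div, inv_one] using (tendsto_nat_floor_div_atTop (R := ℝ)).inv₀ one_ne_zero

theorem tendsto_nat_floor_add_one_div_atTop :
    Tendsto (fun t : ℝ => (⌊t⌋₊ + 1) / t) atTop (𝓝 1) := by
  simpa only [add_div, one_div, add_zero] using
    (tendsto_nat_floor_div_atTop (R := ℝ)).add tendsto_inv_atTop_zero

section FlowAverages

open L1pLinf

variable {μ : Measure Ω} {d : ℕ} {T : (Fin d → ℝ) → (Ω →ₘ[μ] ℝ) → (Ω →ₘ[μ] ℝ)}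
  {A : ℝ → (Ω →ₘ[μ] ℝ) → (Ω →ₘ[μ] ℝ)}

open Classical in
/-- The restriction of the flow `T` to `ℕ^d`. The operator `T 0` need not be the identity, hence
the special value at the unit. -/
noncomputable def IsDSFlow.discrete (hT : IsDSFlow μ T) :
    Multiplicative (Fin d → ℕ) →* Module.End ℝ (L1pLinf μ) where
  toFun κ := if κ = 1 then 1 else dsEnd μ (T fun i => (κ.toAdd i : ℝ))
  map_one' := if_pos rfl
  map_mul' κ κ' := by
    rcases eq_or_ne κ 1 with rfl | hκ
    · simp
    rcases eq_or_ne κ' 1 with rfl | hκ'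
    · simp
    have hadd : κ * κ' ≠ 1 := fun h => hκ (mul_eq_one.1 h).1
    have hcast : ∀ κ : Fin d → ℕ, 0 ≤ fun i => (κ i : ℝ) := fun κ i => Nat.cast_nonneg _
    rw [if_neg hκ, if_neg hκ', if_neg hadd]
    refine LinearMap.ext fun f => Subtype.ext ?_
    rw [Module.End.mul_apply, (hT.isPosDS _ (hcast _)).coe_dsEnd,
      (hT.isPosDS _ (hcast _)).coe_dsEnd, (hT.isPosDS _ (hcast _)).coe_dsEnd,
      ← hT.map_add _ _ (hcast _) (hcast _) f f.2]
    congr 1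
    ext i
    exact Nat.cast_add _ _

theorem isDunfordSchwartz_discrete (hT : IsDSFlow μ T) (κ : Multiplicative (Fin d → ℕ)) :
    IsDunfordSchwartz (hT.discrete κ) := by
  change IsDunfordSchwartz (ite _ _ _)
  split_ifs
  · exact .one
  · exact isDunfordSchwartz_dsEnd μ _

theorem discrete_apply_setIntegral (hT : IsDSFlow μ T) (g : Lp ℝ 1 μ) (κ : Fin d → ℕ) :
    hT.discrete (Multiplicative.ofAdd κ) (ofLp (∫ u in cube (Fin d) 1, flowLpOne μ T u g))
      = ofLp (flowLpOne μ T (fun i => (κ i : ℝ)) (∫ u in cube (Fin d) 1, flowLpOne μ T u g)) := by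
  rcases eq_or_ne κ 0 with rfl | hκ
  · rw [← hT.setIntegral_unitCube_flowLpOne, unitCube_zero, ofAdd_zero, map_one,
      Module.End.one_apply]
  · exact congrArg (fun U : Module.End ℝ (L1pLinf μ) => U _) (if_neg hκ)

theorem isOrderedModule_Lp (p : ℝ≥0∞) [Fact (1 ≤ p)] : IsOrderedModule ℝ (Lp ℝ p μ) :=
  .of_smul_nonneg fun c hc f hf => (Lp.coeFn_nonneg (c • f)).1 <| by
    filter_upwards [(Lp.coeFn_nonneg f).2 hf, Lp.coeFn_smul c f] with ω hω hsmul
    rw [hsmul]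
    exact mul_nonneg hc hω

namespace IsFlowAverage

variable (hA : IsFlowAverage μ T A) {g : Lp ℝ 1 μ} {s t : ℝ}
include hA

theorem dsEnd_apply_ofLp (hT : IsDSFlow μ T) (ht : 0 < t) (g : Lp ℝ 1 μ) :
    dsEnd μ (A t) (ofLp g)
      = (t ^ d)⁻¹ • ofLp (∫ u in cube (Fin d) t, flowLpOne μ T u g) := by
  refine Subtype.ext ?_
  rw [(hA.isPosDS t ht).coe_dsEnd]
  exact hA.eq_setIntegral t ht g _ fun u hu => hT.coe_flowLpOne hu g

theorem dsEnd_natCast_apply_ofLp (hT : IsDSFlow μ T) {n : ℕ} (hn : 0 < n) (g : Lp ℝ 1 μ) :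
    dsEnd μ (A n) (ofLp g) = cubeAvg hT.discrete n (dsEnd μ (A 1) (ofLp g)) := by
  rw [hA.dsEnd_apply_ofLp hT (Nat.cast_pos.2 hn), hA.dsEnd_apply_ofLp hT one_pos, one_pow, inv_one,
    one_smul, hT.setIntegral_cube_natCast_flowLpOne, cubeAvg_eq_sum _ hn, Fintype.card_fin, one_div,
    inv_pow, LinearMap.smul_apply, LinearMap.sum_apply, map_sum]
  simp only [discrete_apply_setIntegral]

theorem pow_mul_dsEnd_apply_ofLp_mono (hT : IsDSFlow μ T) (hg : 0 ≤ g) (hs : 0 < s) (hst : s ≤ t) :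
    ∀ᵐ ω ∂μ, s ^ d * dsEnd μ (A s) (ofLp g) ω ≤ t ^ d * dsEnd μ (A t) (ofLp g) ω := by
  have ht : 0 < t := hs.trans_le hst
  have := isOrderedModule_Lp (μ := μ) 1
  have hint : ∫ u in cube (Fin d) s, flowLpOne μ T u g ≤ ∫ u in cube (Fin d) t, flowLpOne μ T u g :=
    setIntegral_mono_set (hT.integrableOn_flowLpOne g t)
      (.of_forall fun u => flowLpOne_nonneg hg u)
      (.of_forall (pi_mono fun i _ => Ioc_subset_Ioc_right hst))
  rw [hA.dsEnd_apply_ofLp hT hs, hA.dsEnd_apply_ofLp hT ht]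
  filter_upwards [(Lp.coeFn_le _ _).2 hint, coeFn_smul (s ^ d)⁻¹ (ofLp (p := 1) _),
    coeFn_smul (t ^ d)⁻¹ (ofLp (p := 1) _)] with ω hω hs' ht'
  rwa [hs', ht', Pi.smul_apply, Pi.smul_apply, smul_eq_mul, smul_eq_mul,
    mul_inv_cancel_left₀ (by positivity), mul_inv_cancel_left₀ (by positivity)]

theorem dsEnd_apply_ofLp_le_add (hT : IsDSFlow μ T) (hg : 0 ≤ g) {K : ℝ}
    (hgK : ∀ᵐ ω ∂μ, |g ω| ≤ K) (hs : 0 < s) (hst : s ≤ t) :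
    ∀ᵐ ω ∂μ, dsEnd μ (A s) (ofLp g) ω
      ≤ dsEnd μ (A t) (ofLp g) ω + ((t / s) ^ d - 1) * K := by
  have hratio : 0 ≤ (t / s) ^ d - 1 := sub_nonneg.2 (one_le_pow₀ ((one_le_div hs).2 hst))
  filter_upwards [hA.pow_mul_dsEnd_apply_ofLp_mono hT hg hs hst,
    (isDunfordSchwartz_dsEnd μ (A t)).abs_le_const (f := ofLp g) hgK] with ω hmono hK
  calc dsEnd μ (A s) (ofLp g) ω
      ≤ (t / s) ^ d * dsEnd μ (A t) (ofLp g) ω := by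
        rwa [div_pow, div_mul_eq_mul_div, le_div_iff₀' (pow_pos hs d)]
    _ = dsEnd μ (A t) (ofLp g) ω + ((t / s) ^ d - 1) * dsEnd μ (A t) (ofLp g) ω := by ring
    _ ≤ dsEnd μ (A t) (ofLp g) ω + ((t / s) ^ d - 1) * K := by
        gcongr
        exact (le_abs_self _).trans hK

theorem auCauchy_dsEnd_natCast (hT : IsDSFlow μ T) (hg : MemLp g 2 μ) :
    AuCauchy μ atTop fun n : ℕ => (dsEnd μ (A n) (ofLp g) : Ω →ₘ[μ] ℝ) := by
  have hg' : MemLp (dsEnd μ (A 1) (ofLp g)) 2 μ := ⟨L1pLinf.aestronglyMeasurable _,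
    ((isDunfordSchwartz_dsEnd μ (A 1)).eLpNorm_two_le (ofLp g)).trans_lt hg.2⟩
  refine (auCauchy_cubeAvg (isDunfordSchwartz_discrete hT) hg').congr' ?_
  filter_upwards [eventually_gt_atTop 0] with n hn
  rw [hA.dsEnd_natCast_apply_ofLp hT hn]

theorem auCauchy_dsEnd_of_nonneg (hT : IsDSFlow μ T) (hg : 0 ≤ g) {K : ℝ}
    (hgK : ∀ᵐ ω ∂μ, |g ω| ≤ K) (hg2 : MemLp g 2 μ) :
    AuCauchy μ atTop fun t => (dsEnd μ (A t) (ofLp g) : Ω →ₘ[μ] ℝ) := by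
  have herror : ∀ {r : ℝ → ℝ}, Tendsto r atTop (𝓝 1) →
      Tendsto (fun t => (r t ^ d - 1) * K) atTop (𝓝 0) := fun hr => by
    simpa using ((hr.pow d).sub_const 1).mul_const K
  refine auCauchy_of_sandwich fun ε hε => ⟨_, hA.auCauchy_dsEnd_natCast hT hg2,
    fun t => ⌊t⌋₊, fun t => ⌊t⌋₊ + 1, tendsto_nat_floor_atTop,
    (tendsto_add_atTop_nat 1).comp tendsto_nat_floor_atTop, ∅, .empty,
    measure_empty.trans_le zero_le, ?_⟩
  filter_upwards [(herror tendsto_div_nat_floor_atTop).eventually (ge_mem_nhds hε),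
    (herror tendsto_nat_floor_add_one_div_atTop).eventually (ge_mem_nhds hε),
    eventually_ge_atTop 1] with t hlower hupper ht
  have hfloor : 0 < (⌊t⌋₊ : ℝ) := Nat.cast_pos.2 (Nat.floor_pos.2 ht)
  have ht0 : 0 < t := one_pos.trans_le ht
  filter_upwards [hA.dsEnd_apply_ofLp_le_add hT hg hgK hfloor (Nat.floor_le ht0.le),
    hA.dsEnd_apply_ofLp_le_add hT hg hgK ht0 (Nat.lt_floor_add_one t).le] with ω h₁ h₂ _
  push_cast
  exact ⟨by linarith, by linarith⟩

theorem abs_dsEnd_apply_ofLp_le (hT : IsDSFlow μ T) (ht : 1 ≤ t) (g : Lp ℝ 1 μ) :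
    ∀ᵐ ω ∂μ, |dsEnd μ (A t) (ofLp g) ω|
      ≤ 2 ^ d * cubeAvg hT.discrete (⌊t⌋₊ + 1) (dsEnd μ (A 1) (ofLp |g|)) ω := by
  have ht0 : 0 < t := one_pos.trans_le ht
  have hn : t ≤ ((⌊t⌋₊ + 1 : ℕ) : ℝ) := mod_cast (Nat.lt_floor_add_one t).le
  have hn' : ((⌊t⌋₊ + 1 : ℕ) : ℝ) ≤ 2 * t := by
    push_cast
    linarith [Nat.floor_le ht0.le]
  rw [← hA.dsEnd_natCast_apply_ofLp hT (Nat.succ_pos _)]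
  filter_upwards [(isDunfordSchwartz_dsEnd μ (A t)).abs_le (f := ofLp g) (g := ofLp |g|)
    ((Lp.coeFn_abs g).symm.le), hA.pow_mul_dsEnd_apply_ofLp_mono hT (abs_nonneg g) ht0 hn,
    (isDunfordSchwartz_dsEnd μ (A (⌊t⌋₊ + 1 : ℕ))).nonneg (ofLp |g|)
      ((Lp.coeFn_nonneg _).2 (abs_nonneg g))] with ω habs hmono hnonneg
  refine habs.trans (le_of_mul_le_mul_left (hmono.trans ?_) (pow_pos ht0 d))
  calc ((⌊t⌋₊ + 1 : ℕ) : ℝ) ^ d * dsEnd μ (A (⌊t⌋₊ + 1 : ℕ)) (ofLp |g|) ω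
      ≤ (2 * t) ^ d * dsEnd μ (A (⌊t⌋₊ + 1 : ℕ)) (ofLp |g|) ω := by
        gcongr
    _ = t ^ d * (2 ^ d * dsEnd μ (A (⌊t⌋₊ + 1 : ℕ)) (ofLp |g|) ω) := by ring

theorem continuousMaximal (hT : IsDSFlow μ T) :
    ContinuousMaximal atTop fun t => dsEnd μ (A t) ∘ₗ (ofLp : Lp ℝ 1 μ →ₗ[ℝ] L1pLinf μ) := by
  have hc := maximalConst_pos d
  refine continuousMaximal_of_weak_type (C := maximalConst d / 2 ^ d) (by positivity) one_ne_zero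
    fun g lam hlam => ?_
  have hpos : 0 ≤ᵐ[μ] ofLp |g| := (Lp.coeFn_nonneg _).2 (abs_nonneg g)
  have hle : ∫⁻ ω, ENNReal.ofReal (dsEnd μ (A 1) (ofLp |g|) ω) ∂μ ≤ ENNReal.ofReal ‖g‖ := by
    refine ((isDunfordSchwartz_dsEnd μ (A 1)).lintegral_ofReal_le _).trans_eq ?_
    rw [ofReal_norm, Lp.enorm_def, eLpNorm_one_eq_lintegral_enorm]
    refine lintegral_congr_ae ((Lp.coeFn_abs g).mono fun ω hω => ?_)
    simp only [coeFn_ofLp, hω, Real.enorm_eq_ofReal_abs]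
  have hmax := cubeAvg_maximal_inequality (isDunfordSchwartz_discrete hT)
    ((isDunfordSchwartz_dsEnd μ (A 1)).nonneg _ hpos) (ne_top_of_le_ne_top ofReal_ne_top hle)
    (show 0 ≤ lam / 2 ^ d by positivity)
  rw [mul_div_left_comm, mul_comm lam] at hmax
  refine ⟨toMeasurable μ _, measurableSet_toMeasurable _ _, by
    rw [pow_one, pow_one, measure_toMeasurable]; exact hmax.trans hle, ?_⟩
  filter_upwards [eventually_ge_atTop 1] with t ht
  filter_upwards [hA.abs_dsEnd_apply_ofLp_le hT ht g] with ω hω hωS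
  have hlevel : cubeAvg hT.discrete (⌊t⌋₊ + 1) (dsEnd μ (A 1) (ofLp |g|)) ω ≤ lam / 2 ^ d :=
    not_lt.1 fun hlt => hωS (subset_toMeasurable _ _ ⟨_, Nat.succ_pos _, hlt⟩)
  exact hω.trans ((le_div_iff₀' (by positivity)).1 hlevel)

theorem auCauchySubmodule_eq_top (hT : IsDSFlow μ T) :
    (auCauchySubmodule atTop fun t => dsEnd μ (A t) ∘ₗ (ofLp : Lp ℝ 1 μ →ₗ[ℝ] L1pLinf μ)) = ⊤ := by
  let W := auCauchySubmodule atTop fun t => dsEnd μ (A t) ∘ₗ (ofLp : Lp ℝ 1 μ →ₗ[ℝ] L1pLinf μ)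
  have hclosed : IsClosed (W : Set (Lp ℝ 1 μ)) :=
    (hA.continuousMaximal hT).isClosed_auCauchySubmodule
  have hindicator : ∀ {s : Set Ω} (hs : MeasurableSet s) (hμs : μ s ≠ ∞),
      indicatorConstLp 1 hs hμs (1 : ℝ) ∈ W := fun {s} hs hμs => by
    have hcoe := indicatorConstLp_coeFn (p := 1) (hs := hs) (hμs := hμs) (c := (1 : ℝ))
    rw [mem_auCauchySubmodule]
    refine hA.auCauchy_dsEnd_of_nonneg hT (K := 1) ?_ ?_ ?_
    · rw [← Lp.coeFn_nonneg]
      exact hcoe.mono fun ω hω => hω ▸ indicator_nonneg (fun _ _ => zero_le_one) ω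
    · filter_upwards [hcoe] with ω hω
      rw [hω]
      exact (norm_indicator_le_norm_self (fun _ => (1 : ℝ)) ω).trans_eq norm_one
    · exact (memLp_indicator_const 2 hs 1 (.inr hμs)).ae_eq hcoe.symm
  refine eq_top_iff.2 fun g _ => Lp.induction one_ne_top (· ∈ W) (fun c s hs hμs => ?_)
    (fun f g hf hg _ => W.add_mem) hclosed g
  have hsmul : indicatorConstLp 1 hs hμs.ne c = c • indicatorConstLp 1 hs hμs.ne (1 : ℝ) := by
    rw [indicatorConstLp, indicatorConstLp, ← MemLp.toLp_const_smul]
    congr 1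
    rw [Pi.smul_def, ← indicator_const_smul, smul_eq_mul, mul_one]
  rw [Lp.simpleFunc.coe_indicatorConst, hsmul]
  exact W.smul_mem c (hindicator hs hμs.ne)

theorem auCauchy (hT : IsDSFlow μ T) {f : Ω →ₘ[μ] ℝ} (hf : MemRmu μ f) :
    AuCauchy μ atTop fun t => A t f := by
  refine auCauchy_of_approx fun ε hε => ?_
  obtain ⟨g, hg⟩ := exists_Lp_one_abs_sub_le hε.le (hf.lintegral_ne_top hε)
  have hgW : g ∈ auCauchySubmodule atTop fun t => dsEnd μ (A t) ∘ₗ ofLp := by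
    rw [hA.auCauchySubmodule_eq_top hT]
    exact Submodule.mem_top
  rw [mem_auCauchySubmodule] at hgW
  refine ⟨_, hgW, ∅, .empty, measure_empty.trans_le zero_le, ?_⟩
  let f' : L1pLinf μ := ⟨f, hf.1⟩
  have hsub : ∀ᵐ ω ∂μ, |(f' - ofLp g) ω| ≤ ε := by
    filter_upwards [hg, coeFn_sub f' (ofLp g)] with ω hω hsub
    rwa [hsub]
  filter_upwards [eventually_gt_atTop 0] with t ht
  have hle := (isDunfordSchwartz_dsEnd μ (A t)).abs_le_const hsub
  rw [map_sub] at hle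
  filter_upwards [hle, coeFn_sub (dsEnd μ (A t) f') (dsEnd μ (A t) (ofLp g))] with ω hω hsub _
  rw [← (hA.isPosDS t ht).coe_dsEnd f']
  rwa [hsub] at hω

end IsFlowAverage

theorem flow_averages_au_Rmu_general (hT : IsDSFlow μ T) (hA : IsFlowAverage μ T A)
    {f : Ω →ₘ[μ] ℝ} (hf : MemRmu μ f) :
    ∃ g : Ω →ₘ[μ] ℝ, MemRmu μ g ∧ AuTendsto μ atTop (fun t => A t f) g := by
  have hcauchy := hA.auCauchy hT hf
  obtain ⟨g, hg⟩ := hcauchy.exists_ae_tendsto tendsto_natCast_atTop_atTop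
  have hbound : ∀ c, 0 < c → ∀ᶠ n : ℕ in atTop,
      ∫⁻ ω, ENNReal.ofReal (|A n f ω| - c) ∂μ ≤ ∫⁻ ω, ENNReal.ofReal (|f ω| - c) ∂μ := by
    intro c hc
    filter_upwards [eventually_gt_atTop 0] with n hn
    rw [← (hA.isPosDS n (Nat.cast_pos.2 hn)).coe_dsEnd ⟨f, hf.1⟩]
    exact (isDunfordSchwartz_dsEnd μ (A n)).lintegral_ofReal_abs_sub_le hc.le ⟨f, hf.1⟩
  exact ⟨g, hf.of_ae_tendsto hbound hg, hcauchy.auTendsto tendsto_natCast_atTop_atTop hg⟩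

end FlowAverages

/-- **Commutative case of Theorem 5.12**: let `{T_u : u ∈ ℝ₊^d}` be a semigroup of
positive Dunford–Schwartz operators which is `L¹`-continuous in the interior of `ℝ₊^d`,
and let `A_t` be the (unique) positive Dunford–Schwartz extension to `L¹+L^∞` of the
Bochner integral average `t^{-d} ∫_{(0,t]^d} T_u(·) du` on `L¹(μ)`.  Then for every
`f ∈ R_μ` the averages `A_t(f)` converge almost uniformly as `t → ∞` to some
`f̂ ∈ R_μ`. -/
theorem flow_averages_au_Rmu (μ : Measure Ω) [SigmaFinite μ] {d : ℕ}
    (T : (Fin d → ℝ) → (Ω →ₘ[μ] ℝ) → (Ω →ₘ[μ] ℝ))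
    (hDS : ∀ u : Fin d → ℝ, 0 ≤ u → IsPosDS μ (T u))
    (hsemi : ∀ u v : Fin d → ℝ, 0 ≤ u → 0 ≤ v →
      ∀ f : Ω →ₘ[μ] ℝ, MemL1pLinf μ f → T (u + v) f = T u (T v f))
    (hcont : ∀ f : Ω →ₘ[μ] ℝ, eLpNorm f 1 μ ≠ ∞ → ∀ v : Fin d → ℝ, (∀ i, 0 < v i) →
      Tendsto (fun u => eLpNorm (⇑(T u f - T v f)) 1 μ)
        (𝓝[{u : Fin d → ℝ | 0 ≤ u}] v) (𝓝 0))
    (A : ℝ → (Ω →ₘ[μ] ℝ) → (Ω →ₘ[μ] ℝ))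
    (hA_DS : ∀ t : ℝ, 0 < t → IsPosDS μ (A t))
    (hA_agree : ∀ t : ℝ, 0 < t → ∀ g : Lp ℝ 1 μ,
      ∀ F : (Fin d → ℝ) → Lp ℝ 1 μ, (∀ u : Fin d → ℝ, 0 ≤ u → (F u : Ω →ₘ[μ] ℝ) = T u g) →
        A t (g : Ω →ₘ[μ] ℝ) =
          (t ^ d)⁻¹ •
            ((∫ u in Set.univ.pi fun _ : Fin d => Set.Ioc (0 : ℝ) t, F u : Lp ℝ 1 μ) :
              Ω →ₘ[μ] ℝ))
    (f : Ω →ₘ[μ] ℝ) (hf : MemRmu μ f) :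
    ∃ fhat : Ω →ₘ[μ] ℝ, MemRmu μ fhat ∧
      AuTendsto μ atTop (fun t : ℝ => A t f) fhat :=
  flow_averages_au_Rmu_general ⟨hDS, hsemi, hcont⟩ ⟨hA_DS, hA_agree⟩ hf
end

section
/- Let X be a Banach space and let {T_u : u ∈ [0,∞)^d} be a semigroup of bounded linear operators on X (T_0 = I and T_{u+v} = T_u T_v) such that for a fixed x ∈ X the map u ↦ T_u(x) is Bochner integrable on (0,n]^d with respect to Lebesgue measure for every n ∈ ℕ. Let y = ∫_{(0,1]^d} T_u(x) du. Then for every n ∈ ℕ: ∫_{(0,n]^d} T_u(x) du = ∑_{i₁=0}^{n−1} ⋯ ∑_{i_d=0}^{n−1} T_{(1,0,…,0)}^{i₁} ⋯ T_{(0,…,0,1)}^{i_d} (y), where (1,0,…,0), …, (0,…,0,1) are the standard unit vectors of ℝ^d. -/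
open MeasureTheory Filter Set ENNReal Topology

/-!
The box `(0, n]` is the disjoint union of the translates `k + (0, 1]` of the unit box by
lattice points `k`. The semigroup law gives `T (k + u) x = T_{e₁}^{k₁} ⋯ T_{e_d}^{k_d} (T u x)`
for `u ≥ 0`, so translation invariance of the measure turns the integral over each translate into
the image, under this product, of the integral over the unit box.
-/

section Semigroup

variable {E M : Type*} [Preorder E] [Monoid M] {T : E → M}

theorem pow_mul_eq_map_nsmul_add [AddMonoid E] [AddLeftMono E]
    (hT : ∀ u v, 0 ≤ u → 0 ≤ v → T (u + v) = T u * T v) {u v : E} (hu : 0 ≤ u) (hv : 0 ≤ v)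
    (m : ℕ) : T u ^ m * T v = T (m • u + v) := by
  induction m with
  | zero => simp
  | succ m ih =>
    rw [pow_succ', mul_assoc, ih, ← hT u _ hu (add_nonneg (nsmul_nonneg hu m) hv), succ_nsmul',
      add_assoc]

theorem prod_ofFn_pow_mul_eq_map_sum_nsmul_add [AddCommMonoid E] [AddLeftMono E]
    (hT : ∀ u v, 0 ≤ u → 0 ≤ v → T (u + v) = T u * T v) {d : ℕ} {e : Fin d → E}
    (he : ∀ j, 0 ≤ e j) (k : Fin d → ℕ) {v : E} (hv : 0 ≤ v) :
    (List.ofFn fun j => T (e j) ^ k j).prod * T v = T (∑ j, k j • e j + v) := by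
  induction d with
  | zero => simp
  | succ d ih =>
    have htail : 0 ≤ ∑ j : Fin d, k j.succ • e j.succ + v :=
      add_nonneg (Finset.sum_nonneg fun j _ => nsmul_nonneg (he j.succ) _) hv
    rw [List.ofFn_succ, List.prod_cons, mul_assoc, ih (fun j => he j.succ) (fun j => k j.succ),
      pow_mul_eq_map_nsmul_add hT (he 0) htail, Fin.sum_univ_succ, add_assoc]

end Semigroup

theorem sum_nsmul_single_one {ι R : Type*} [Fintype ι] [DecidableEq ι] [AddCommMonoidWithOne R]
    (k : ι → ℕ) : ∑ j, k j • (Pi.single j 1 : ι → R) = fun j => (k j : R) := by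
  simp only [← Pi.single_smul, nsmul_one]
  exact Finset.univ_sum_single _

section Boxes

open scoped Pointwise

variable {ι : Type*} {α : Type*} [LinearOrder α] [SuccOrder α] {β : ι → Type*}
  {f : ∀ i, α → β i}

theorem biUnion_pi_Ioc_map_succ [IsSuccArchimedean α] [∀ i, LinearOrder (β i)]
    (hf : ∀ i, Monotone (f i)) (m n : ι → α) :
    ⋃ k ∈ univ.pi fun i => Ico (m i) (n i),
        univ.pi (fun i => Ioc (f i (k i)) (f i (Order.succ (k i)))) =
      univ.pi fun i => Ioc (f i (m i)) (f i (n i)) := by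
  simp only [biUnion_univ_pi (t := fun i a => Ioc (f i a) (f i (Order.succ a))),
    (hf _).biUnion_Ico_Ioc_map_succ]

theorem pairwise_disjoint_pi_Ioc_map_succ [∀ i, Preorder (β i)] (hf : ∀ i, Monotone (f i)) :
    Pairwise (Function.onFun Disjoint
      fun k : ι → α => univ.pi fun i => Ioc (f i (k i)) (f i (Order.succ (k i)))) := by
  intro k l hkl
  obtain ⟨i, hi⟩ := Function.ne_iff.1 hkl
  exact disjoint_univ_pi.2 ⟨i, (hf i).pairwise_disjoint_on_Ioc_succ hi⟩

theorem vadd_univ_pi_Ioc {γ : ι → Type*} [∀ i, AddCommGroup (γ i)] [∀ i, PartialOrder (γ i)]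
    [∀ i, IsOrderedAddMonoid (γ i)] (c a b : ∀ i, γ i) :
    c +ᵥ (univ.pi fun i => Ioc (a i) (b i)) = univ.pi fun i => Ioc (c i + a i) (c i + b i) :=
  (piMap_image_univ_pi (fun i x => c i + x) _).trans (by simp only [image_const_add_Ioc])

variable {R : Type*} [AddCommGroupWithOne R]

theorem univ_pi_Ioc_natCast_eq_biUnion_vadd [Fintype ι] [DecidableEq ι] [LinearOrder R]
    [IsOrderedAddMonoid R] [ZeroLEOneClass R] (n : ι → ℕ) :
    (univ.pi fun i => Ioc 0 (n i : R)) = ⋃ k ∈ Fintype.piFinset fun i => Finset.range (n i),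
      (fun i => (k i : R)) +ᵥ univ.pi fun _ : ι => Ioc (0 : R) 1 := by
  simpa [vadd_univ_pi_Ioc] using
    (biUnion_pi_Ioc_map_succ (fun _ : ι => Nat.mono_cast (α := R)) 0 n).symm

theorem pairwise_disjoint_natCast_vadd_univ_pi_Ioc [PartialOrder R] [IsOrderedAddMonoid R]
    [ZeroLEOneClass R] :
    Pairwise (Function.onFun Disjoint fun k : ι → ℕ =>
      (fun i => (k i : R)) +ᵥ univ.pi fun _ : ι => Ioc (0 : R) 1) := by
  simpa [vadd_univ_pi_Ioc] using
    pairwise_disjoint_pi_Ioc_map_succ fun _ : ι => Nat.mono_cast (α := R)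

end Boxes

section Translation

open scoped Pointwise

variable {G X : Type*} [AddGroup G] [MeasurableSpace G] [MeasurableAdd G] {μ : Measure G}
  [μ.IsAddLeftInvariant] [NormedAddCommGroup X] [NormedSpace ℝ X] {f : G → X}
  {L : X →L[ℝ] X} {c : G} {s : Set G}

theorem integrableOn_vadd_of_eqOn_clm (hs : MeasurableSet s) (hf : IntegrableOn f s μ)
    (hL : EqOn (fun u => f (c + u)) (fun u => L (f u)) s) : IntegrableOn f (c +ᵥ s) μ :=
  ((measurePreserving_add_left μ c).integrableOn_image (measurableEmbedding_addLeft c)).2 <|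
    IntegrableOn.congr_fun (L.integrable_comp hf) hL.symm hs

theorem setIntegral_vadd_of_eqOn_clm [CompleteSpace X] (hs : MeasurableSet s)
    (hf : IntegrableOn f s μ) (hL : EqOn (fun u => f (c + u)) (fun u => L (f u)) s) :
    ∫ u in c +ᵥ s, f u ∂μ = L (∫ u in s, f u ∂μ) :=
  calc
    ∫ u in c +ᵥ s, f u ∂μ = ∫ u in s, f (c + u) ∂μ :=
      (measurePreserving_add_left μ c).setIntegral_image_emb (measurableEmbedding_addLeft c) f s
    _ = ∫ u in s, L (f u) ∂μ := setIntegral_congr_fun hs hL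
    _ = L (∫ u in s, f u ∂μ) := L.integral_comp_comm hf

end Translation

theorem setIntegral_pi_Ioc_natCast_eq_sum {ι X : Type*} [Fintype ι] [DecidableEq ι]
    [NormedAddCommGroup X] [NormedSpace ℝ X] [CompleteSpace X] {μ : Measure (ι → ℝ)}
    [μ.IsAddLeftInvariant] {f : (ι → ℝ) → X} {L : (ι → ℕ) → X →L[ℝ] X}
    (hf : IntegrableOn f (univ.pi fun _ => Ioc 0 1) μ)
    (hL : ∀ k : ι → ℕ, EqOn (fun u => f ((fun j => (k j : ℝ)) + u)) (fun u => L k (f u))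
      (univ.pi fun _ => Ioc 0 1)) (n : ι → ℕ) :
    ∫ u in univ.pi fun i => Ioc 0 (n i : ℝ), f u ∂μ =
      ∑ k ∈ Fintype.piFinset fun i => Finset.range (n i),
        L k (∫ u in univ.pi fun _ => Ioc 0 1, f u ∂μ) := by
  have hunit : MeasurableSet (univ.pi fun _ : ι => Ioc (0 : ℝ) 1) :=
    MeasurableSet.univ_pi fun _ => measurableSet_Ioc
  rw [univ_pi_Ioc_natCast_eq_biUnion_vadd,
    integral_biUnion_finset _ (fun k _ => hunit.const_vadd _)
      (pairwise_disjoint_natCast_vadd_univ_pi_Ioc.set_pairwise _)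
      fun k _ => integrableOn_vadd_of_eqOn_clm hunit hf (hL k)]
  exact Finset.sum_congr rfl fun k _ => setIntegral_vadd_of_eqOn_clm hunit hf (hL k)

theorem integral_box_eq_sum_iterates_general {X : Type*} [NormedAddCommGroup X]
    [NormedSpace ℝ X] [CompleteSpace X] {d : ℕ} {μ : Measure (Fin d → ℝ)}
    [μ.IsAddLeftInvariant] {T : (Fin d → ℝ) → X →L[ℝ] X} {x : X}
    (hT : ∀ u v, 0 ≤ u → 0 ≤ v → T (u + v) = T u * T v)
    (hf : IntegrableOn (fun u => T u x) (univ.pi fun _ => Ioc 0 1) μ) (n : Fin d → ℕ) :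
    ∫ u in univ.pi fun j => Ioc 0 (n j : ℝ), T u x ∂μ =
      ∑ k ∈ Fintype.piFinset fun j => Finset.range (n j),
        (List.ofFn fun j => T (Pi.single j 1) ^ k j).prod
          (∫ u in univ.pi fun _ => Ioc 0 1, T u x ∂μ) := by
  refine setIntegral_pi_Ioc_natCast_eq_sum
    (L := fun k => (List.ofFn fun j => T (Pi.single j 1) ^ k j).prod) hf (fun k u hu => ?_) n
  have hu_nonneg : 0 ≤ u := fun j => (hu j (mem_univ j)).1.le
  have hk := prod_ofFn_pow_mul_eq_map_sum_nsmul_add hT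
    (e := fun j => Pi.single j 1) (fun _ => Pi.single_nonneg.2 zero_le_one) k hu_nonneg
  rw [sum_nsmul_single_one] at hk
  exact DFunLike.congr_fun hk.symm x

/-- **Key identity in the proof of Theorem 5.10**: for a semigroup `{T_u : u ∈ [0,∞)^d}`
of bounded linear operators on a Banach space `X` such that `u ↦ T_u x` is Bochner
integrable on `(0,n]^d` for every `n`, setting `y = ∫_{(0,1]^d} T_u x du` one has
`∫_{(0,n]^d} T_u x du = ∑_{i ∈ [0,n)^d} T_{e₁}^{i₁} ⋯ T_{e_d}^{i_d} y`. -/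
theorem integral_box_eq_sum_iterates {X : Type*} [NormedAddCommGroup X]
    [NormedSpace ℝ X] [CompleteSpace X] {d : ℕ}
    (T : (Fin d → ℝ) → X →L[ℝ] X) (x : X)
    (hT0 : T 0 = 1)
    (hsemi : ∀ u v : Fin d → ℝ, 0 ≤ u → 0 ≤ v → T (u + v) = T u * T v)
    (hInt : ∀ n : ℕ,
      IntegrableOn (fun u => T u x) (Set.univ.pi fun _ : Fin d => Set.Ioc (0 : ℝ) n) volume)
    (y : X) (hy : y = ∫ u in Set.univ.pi fun _ : Fin d => Set.Ioc (0 : ℝ) 1, T u x) :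
    ∀ n : ℕ,
      (∫ u in Set.univ.pi fun _ : Fin d => Set.Ioc (0 : ℝ) n, T u x)
        = ∑ k ∈ Fintype.piFinset fun _ : Fin d => Finset.range n,
            (List.ofFn fun j : Fin d => T (Pi.single j 1) ^ k j).prod y := by
  subst hy
  exact fun n => integral_box_eq_sum_iterates_general hsemi (by simpa using hInt 1) fun _ => n
end

section
/- Let (Ω, 𝒜, μ) be a σ-finite measure space and let f be a measurable function belonging to L¹(μ)+L^∞(μ) (i.e. f = g + h with g ∈ L¹(μ), h ∈ L^∞(μ)). Then the following are equivalent: (i) μ{ |f| > λ } < ∞ for every λ > 0; (ii) for every ε > 0 there exists φ ∈ L¹(μ) ∩ L^∞(μ) and a decomposition f − φ = u + v with u ∈ L¹(μ), v ∈ L^∞(μ) and ‖u‖₁ + ‖v‖_∞ ≤ ε. In other words, R_μ is the closure of L¹(μ) ∩ L^∞(μ) in L¹(μ)+L^∞(μ) with respect to the norm ‖f‖_{L¹+L^∞} = inf{ ‖u‖₁ + ‖v‖_∞ : f = u + v, u ∈ L¹(μ), v ∈ L^∞(μ) }. -/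
/-!
Cut `f` at height `ε / 2`. The part below has `L^∞`-norm at most `ε / 2`. The part above lives on a
set of finite measure, where `L^∞` embeds in `L^p`; so it belongs to `L^p`, and the simple functions
in `L^p` approximate it. Conversely, if `f = φ + u + v` with `φ, u ∈ L^p` and `‖v‖_∞ < r`, then
`|f| > r` forces `|φ + u| > r - ‖v‖_∞`, and Chebyshev's inequality applies to `φ + u`.
-/

open MeasureTheory Filter Set ENNReal Topology

variable {Ω : Type*} [MeasurableSpace Ω]

variable {E : Type*} [NormedAddCommGroup E] {μ : Measure Ω} {p : ℝ≥0∞}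

section Functions

variable {f g h : Ω → E} {s : Set Ω}

theorem memLp_indicator_add_of_memLp_top (hg : MemLp g p μ) (hh : MemLp h ∞ μ)
    (hs : MeasurableSet s) (hμs : μ s ≠ ∞) : MemLp (s.indicator (g + h)) p μ := by
  have h_indicator : MemLp (s.indicator h) p μ :=
    (hh.indicator hs).mono_exponent_of_measure_support_ne_top
      (fun _ hx ↦ indicator_of_notMem hx h) hμs le_top
  rw [indicator_add']
  exact (hg.indicator hs).add h_indicator

theorem eLpNorm_top_indicator_compl_lt_norm_le {r : ℝ} (hr : 0 ≤ r) :
    eLpNorm ({x | r < ‖f x‖}ᶜ.indicator f) ∞ μ ≤ ENNReal.ofReal r := by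
  rw [eLpNorm_exponent_top]
  refine eLpNormEssSup_le_of_ae_bound (ae_of_all μ fun x ↦ ?_)
  rw [norm_indicator_eq_indicator_norm]
  exact indicator_apply_le' (fun hx ↦ not_lt.1 hx) fun _ ↦ hr

theorem measure_lt_norm_lt_top_of_ae_eq_add (hp_ne_zero : p ≠ 0) (hp_ne_top : p ≠ ∞)
    (hg : MemLp g p μ) {r : ℝ} (hh : eLpNorm h ∞ μ < ENNReal.ofReal r) (hfgh : f =ᵐ[μ] g + h) :
    μ {x | r < ‖f x‖} < ∞ := by
  refine (measure_mono_ae ?_).trans_lt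
    (hg.meas_ge_lt_top' hp_ne_zero hp_ne_top (tsub_pos_of_lt hh).ne')
  filter_upwards [hfgh, enorm_ae_le_eLpNormEssSup h μ] with x hx_add hx_le (hx : r < ‖f x‖)
  refine tsub_le_iff_right.2 ?_
  calc
    ENNReal.ofReal r ≤ ‖f x‖ₑ := by
      rw [← ofReal_norm]
      exact ENNReal.ofReal_le_ofReal hx.le
    _ = ‖g x + h x‖ₑ := by rw [hx_add, Pi.add_apply]
    _ ≤ ‖g x‖ₑ + ‖h x‖ₑ := enorm_add_le _ _
    _ ≤ ‖g x‖ₑ + eLpNorm h ∞ μ := by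
      rw [eLpNorm_exponent_top]
      gcongr

theorem exists_simpleFunc_sub_eq_add_eLpNorm_le (hp_ne_top : p ≠ ∞) (hf : StronglyMeasurable f)
    (hg : MemLp g p μ) (hh : MemLp h ∞ μ) (hfgh : f =ᵐ[μ] g + h)
    {ε : ℝ} (hε : 0 < ε) (hfin : μ {x | ε / 2 < ‖f x‖} < ∞) :
    ∃ φ : SimpleFunc Ω E, MemLp φ p μ ∧
      ∃ u v : Ω → E, AEStronglyMeasurable u μ ∧ AEStronglyMeasurable v μ ∧ f - ⇑φ = u + v ∧
        eLpNorm u p μ + eLpNorm v ∞ μ ≤ ENNReal.ofReal ε := by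
  have hε2 : 0 < ε / 2 := half_pos hε
  set A : Set Ω := {x | ε / 2 < ‖f x‖}
  have hA : MeasurableSet A := hf.norm.measurable measurableSet_Ioi
  have hfA : MemLp (A.indicator f) p μ :=
    (memLp_congr_ae hfgh.indicator).2 (memLp_indicator_add_of_memLp_top hg hh hA hfin.ne)
  obtain ⟨φ, hφ_close, hφ⟩ :=
    hfA.exists_simpleFunc_eLpNorm_sub_lt hp_ne_top (ENNReal.ofReal_pos.2 hε2).ne'
  refine ⟨φ, hφ, A.indicator f - ⇑φ, Aᶜ.indicator f,
    hfA.aestronglyMeasurable.sub φ.aestronglyMeasurable,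
    (hf.indicator hA.compl).aestronglyMeasurable, ?_, ?_⟩
  · rw [sub_add_eq_add_sub, indicator_self_add_compl]
  · calc
      eLpNorm (A.indicator f - ⇑φ) p μ + eLpNorm (Aᶜ.indicator f) ∞ μ
          ≤ ENNReal.ofReal (ε / 2) + ENNReal.ofReal (ε / 2) :=
        add_le_add hφ_close.le (eLpNorm_top_indicator_compl_lt_norm_le hε2.le)
      _ = ENNReal.ofReal ε := by rw [← ENNReal.ofReal_add hε2.le hε2.le, add_halves]

end Functions

theorem memLp_coeFn_iff {f : Ω →ₘ[μ] E} : MemLp f p μ ↔ eLpNorm f p μ ≠ ∞ :=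
  ⟨fun hf ↦ hf.eLpNorm_ne_top, fun hf ↦ ⟨f.aestronglyMeasurable, hf.lt_top⟩⟩

theorem exists_approx_of_measure_lt_norm_lt_top (hp_ne_top : p ≠ ∞) {f g h : Ω →ₘ[μ] E}
    (hg : MemLp g p μ) (hh : MemLp h ∞ μ) (hfgh : f = g + h)
    {ε : ℝ} (hε : 0 < ε) (hfin : μ {x | ε / 2 < ‖f x‖} < ∞) :
    ∃ φ : Ω →ₘ[μ] E, MemLp φ p μ ∧ MemLp φ ∞ μ ∧
      ∃ u v : Ω →ₘ[μ] E, f - φ = u + v ∧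
        eLpNorm u p μ + eLpNorm v ∞ μ ≤ ENNReal.ofReal ε := by
  obtain ⟨φ, hφ, u, v, hu, hv, h_sub, h_norm⟩ :=
    exists_simpleFunc_sub_eq_add_eLpNorm_le hp_ne_top f.stronglyMeasurable hg hh
      (hfgh ▸ AEEqFun.coeFn_add g h) hε hfin
  have hφ_meas : AEStronglyMeasurable φ μ := φ.aestronglyMeasurable
  have hφ_mk : AEEqFun.mk φ hφ_meas =ᵐ[μ] φ := AEEqFun.coeFn_mk φ hφ_meas
  refine ⟨AEEqFun.mk φ hφ_meas, (memLp_congr_ae hφ_mk).2 hφ,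
    (memLp_congr_ae hφ_mk).2 (φ.memLp_top μ), AEEqFun.mk u hu, AEEqFun.mk v hv, ?_, ?_⟩
  · calc
      f - AEEqFun.mk φ hφ_meas
          = AEEqFun.mk f f.aestronglyMeasurable - AEEqFun.mk φ hφ_meas := by rw [AEEqFun.mk_coeFn]
      _ = AEEqFun.mk (⇑f - ⇑φ) (f.aestronglyMeasurable.sub hφ_meas) :=
        (AEEqFun.mk_sub _ _ f.aestronglyMeasurable hφ_meas).symm
      _ = AEEqFun.mk u hu + AEEqFun.mk v hv := by simp only [h_sub, AEEqFun.mk_add_mk]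
  · rwa [eLpNorm_aeeqFun hu, eLpNorm_aeeqFun hv]

theorem measure_lt_norm_lt_top_of_sub_eq_add (hp_ne_zero : p ≠ 0) (hp_ne_top : p ≠ ∞)
    {f φ u v : Ω →ₘ[μ] E} (hφ : MemLp φ p μ) (hu : MemLp u p μ) (h_sub : f - φ = u + v)
    {r : ℝ} (hv : eLpNorm v ∞ μ < ENNReal.ofReal r) : μ {x | r < ‖f x‖} < ∞ := by
  have hf : f = φ + u + v := by rw [add_assoc, ← h_sub, add_sub_cancel]
  have hf_ae : f =ᵐ[μ] ⇑φ + ⇑u + ⇑v := by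
    rw [hf]
    exact (AEEqFun.coeFn_add (φ + u) v).trans ((AEEqFun.coeFn_add φ u).add .rfl)
  exact measure_lt_norm_lt_top_of_ae_eq_add hp_ne_zero hp_ne_top (hφ.add hu) hv hf_ae

theorem memRmu_iff_approx_general (hp_ne_zero : p ≠ 0) (hp_ne_top : p ≠ ∞) (f : Ω →ₘ[μ] E)
    (hf : ∃ g h : Ω →ₘ[μ] E, eLpNorm g p μ ≠ ∞ ∧ eLpNorm h ∞ μ ≠ ∞ ∧ f = g + h) :
    (∀ r : ℝ, 0 < r → μ {x | r < ‖f x‖} < ∞) ↔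
      (∀ ε : ℝ, 0 < ε → ∃ φ : Ω →ₘ[μ] E,
        eLpNorm φ p μ ≠ ∞ ∧ eLpNorm φ ∞ μ ≠ ∞ ∧
        ∃ u v : Ω →ₘ[μ] E, f - φ = u + v ∧
          eLpNorm u p μ + eLpNorm v ∞ μ ≤ ENNReal.ofReal ε) := by
  simp only [← memLp_coeFn_iff] at hf ⊢
  refine ⟨fun hfin ε hε ↦ ?_, fun h_approx r hr ↦ ?_⟩
  · obtain ⟨g, h, hg, hh, hfgh⟩ := hf
    exact exists_approx_of_measure_lt_norm_lt_top hp_ne_top hg hh hfgh hε (hfin _ (half_pos hε))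
  · obtain ⟨φ, hφ, -, u, v, h_sub, h_norm⟩ := h_approx (r / 2) (half_pos hr)
    have hu : MemLp u p μ :=
      memLp_coeFn_iff.2 (ne_top_of_le_ne_top ENNReal.ofReal_ne_top (le_self_add.trans h_norm))
    have hv : eLpNorm v ∞ μ < ENNReal.ofReal r :=
      (le_add_self.trans h_norm).trans_lt
        ((ENNReal.ofReal_lt_ofReal_iff hr).2 (half_lt_self hr))
    exact measure_lt_norm_lt_top_of_sub_eq_add hp_ne_zero hp_ne_top hφ hu h_sub hv

/-- **Commutative case of Proposition 2.1**: for `f ∈ L¹(μ)+L^∞(μ)` the following are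
equivalent: (i) `μ{|f| > λ} < ∞` for every `λ > 0`; (ii) `f` can be approximated in the
`L¹+L^∞`-norm by elements of `L¹(μ) ∩ L^∞(μ)`.  That is, `R_μ` is the closure of
`L¹ ∩ L^∞` in `L¹ + L^∞`. -/
theorem memRmu_iff_approx (μ : Measure Ω) [SigmaFinite μ]
    (f : Ω →ₘ[μ] ℝ)
    (hf : ∃ g h : Ω →ₘ[μ] ℝ, eLpNorm g 1 μ ≠ ∞ ∧ eLpNorm h ⊤ μ ≠ ∞ ∧ f = g + h) :
    (∀ lam : ℝ, 0 < lam → μ {ω | lam < |f ω|} < ∞) ↔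
      (∀ ε : ℝ, 0 < ε → ∃ φ : Ω →ₘ[μ] ℝ,
        eLpNorm φ 1 μ ≠ ∞ ∧ eLpNorm φ ⊤ μ ≠ ∞ ∧
        ∃ u v : Ω →ₘ[μ] ℝ, f - φ = u + v ∧
          eLpNorm u 1 μ + eLpNorm v ⊤ μ ≤ ENNReal.ofReal ε) :=
  memRmu_iff_approx_general one_ne_zero one_ne_top f hf
end
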